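/- Let b > 0 be real, let s₁, s₂, s₃, p₁, p₂ ∈ ℝ and set p₃ := p₁ + p₂. Define M(s₁,s₂,s₃) := w_b(s₁+s₂−s₃)·w_b(s₁+s₃−s₂)·w_b(s₂+s₃−s₁) / w_b(s₁+s₂+s₃), and I(s₃,s₂,s₁;p₂,p₁) := e^{(πi/2)(p₃²−p₁²−p₂²)} · ( w_b(p₁−s₁)·w_b(p₂−s₂) / w_b(p₃−s₃) ) · e^{πi(p₂(s₁+c_b) − p₁(s₂+c_b))} · ∫_ℝ e^{πip(s₁+s₂−s₃+c_b)} · D_{(s₂−s₁−s₃−c_b)/2}(p+p₂) · D_{(s₁−s₂−s₃−c_b)/2}(p−p₁) · D_{(s₁+s₂+s₃−c_b)/2}(p) dp, the integral being absolutely convergent. Then the quantity M(s₁,s₂,s₃)·I(s₃,s₂,s₁;p₂,p₁)² is invariant under each of the three substitutions s₁ ↦ −s₁, s₂ ↦ −s₂, and s₃ ↦ −s₃ (the b-Clebsch–Gordan coefficients satisfy the Weyl symmetries). -/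

import Mathlib

open MeasureTheory Complex Real Filter Topology

noncomputable section

/-- The special point `c_b = i(b+b⁻¹)/2`. -/
def cb (b : ℝ) : ℂ := Complex.I * ((b : ℂ) + (b : ℂ)⁻¹) / 2

/-- The integrand in the integral representation of the noncompact quantum dilogarithm. -/
def ebIntegrand (b ε : ℝ) (z : ℂ) (t : ℝ) : ℂ :=
  Complex.exp (-2 * Complex.I * z * ((t : ℂ) + Complex.I * (ε : ℂ))) /
    (((t : ℂ) + Complex.I * (ε : ℂ)) *
      Complex.sinh ((b : ℂ) * ((t : ℂ) + Complex.I * (ε : ℂ))) *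
      Complex.sinh ((b : ℂ)⁻¹ * ((t : ℂ) + Complex.I * (ε : ℂ))))

/-- The noncompact quantum dilogarithm defined with contour parameter `ε`. -/
def ebE (b ε : ℝ) (z : ℂ) : ℂ :=
  Complex.exp ((1 / 4 : ℂ) * ∫ t : ℝ, ebIntegrand b ε z t)

/-- The noncompact quantum dilogarithm `e_b` (canonical choice of contour parameter;
the value is independent of this choice). -/
def eb (b : ℝ) (z : ℂ) : ℂ := ebE b (π * min b b⁻¹ / 2) z

/-- The function `w_b(x) = e^{−(πi/12)(1+2c_b²)}·e^{πix²/2}/e_b(x)`. -/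
def wb (b : ℝ) (z : ℂ) : ℂ :=
  Complex.exp (-((π : ℂ) * Complex.I / 12) * (1 + 2 * (cb b) ^ 2)) *
    Complex.exp ((π : ℂ) * Complex.I * z ^ 2 / 2) / eb b z

/-- The function `D_α(x) = w_b(x+α)/w_b(x−α)`. -/
def Dfun (b : ℝ) (α x : ℂ) : ℂ := wb b (x + α) / wb b (x - α)

/-- The prefactor `M(s₁,s₂,s₃)` of the squared b-Clebsch–Gordan coefficients. -/
def Mfun (b s₁ s₂ s₃ : ℝ) : ℂ :=
  wb b ((s₁ : ℂ) + (s₂ : ℂ) - (s₃ : ℂ)) * wb b ((s₁ : ℂ) + (s₃ : ℂ) - (s₂ : ℂ)) *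
    wb b ((s₂ : ℂ) + (s₃ : ℂ) - (s₁ : ℂ)) / wb b ((s₁ : ℂ) + (s₂ : ℂ) + (s₃ : ℂ))

/-- The integrand appearing in the b-Clebsch–Gordan coefficients. -/
def CGintegrand (b s₁ s₂ s₃ p₁ p₂ : ℝ) (p : ℝ) : ℂ :=
  Complex.exp ((π : ℂ) * Complex.I * (p : ℂ) * ((s₁ : ℂ) + (s₂ : ℂ) - (s₃ : ℂ) + cb b)) *
    Dfun b (((s₂ : ℂ) - (s₁ : ℂ) - (s₃ : ℂ) - cb b) / 2) ((p : ℂ) + (p₂ : ℂ)) *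
    Dfun b (((s₁ : ℂ) - (s₂ : ℂ) - (s₃ : ℂ) - cb b) / 2) ((p : ℂ) - (p₁ : ℂ)) *
    Dfun b (((s₁ : ℂ) + (s₂ : ℂ) + (s₃ : ℂ) - cb b) / 2) (p : ℂ)

/-- The quantity `I(s₃,s₂,s₁;p₂,p₁)` entering the b-Clebsch–Gordan coefficients
(with `p₃ = p₁ + p₂`). -/
def CGI (b s₁ s₂ s₃ p₁ p₂ : ℝ) : ℂ :=
  Complex.exp ((π : ℂ) * Complex.I / 2 *
      (((p₁ : ℂ) + (p₂ : ℂ)) ^ 2 - (p₁ : ℂ) ^ 2 - (p₂ : ℂ) ^ 2)) *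
    (wb b ((p₁ : ℂ) - (s₁ : ℂ)) * wb b ((p₂ : ℂ) - (s₂ : ℂ)) /
      wb b ((p₁ : ℂ) + (p₂ : ℂ) - (s₃ : ℂ))) *
    Complex.exp ((π : ℂ) * Complex.I *
      ((p₂ : ℂ) * ((s₁ : ℂ) + cb b) - (p₁ : ℂ) * ((s₂ : ℂ) + cb b))) *
    ∫ p : ℝ, CGintegrand b s₁ s₂ s₃ p₁ p₂ p

/-!
Write `c = w_b(0)²`, so that `w_b(z) w_b(-z) = c`. Up to a constant, the Fourier transform of
`D_{(a - c_b)/2}` is `D_{(-a - c_b)/2}`: the functional equation of `w_b` under `z ↦ z ± ib/2`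
makes the quotient of the two sides periodic with imaginary period, the growth of `w_b` makes it
constant, and Fourier inversion determines the constant. Parseval's formula therefore gives a
transformation of the Fourier transform of a product of two such functions (`betaD`); iterating it
and a trivial symmetry gives the transformation `S ↦ -S`, an analogue of Euler's transformation of
`₂F₁`.

The Clebsch–Gordan integral is the integral of a product of three such functions. In the parameters
`aᵢ` of `tripleD` it is symmetric under simultaneous permutations, and writing it by Parseval's
formula as an integral of `betaD` turns the Euler transformation into the flip
`(a₁, a₂, a₃) ↦ (a₁ + a₂ + a₃, -a₃, -a₂)`. Each of the three substitutions `sᵢ ↦ -sᵢ` is this flip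
up to a rotation of the indices. It multiplies `I` by `M / c`, while the product of `M` with its
image is `c²`. The estimates assume `b ≤ 1`, which is no restriction because `w_b` is invariant
under `b ↦ b⁻¹`.
-/

/-! ### Integrals depending on a complex parameter -/

theorem integrable_exp_neg_mul_abs {κ : ℝ} (hκ : 0 < κ) :
    Integrable fun x : ℝ => rexp (-κ * |x|) := by
  rw [← integrableOn_univ, ← Set.Iic_union_Ioi (a := (0 : ℝ)), integrableOn_union]
  constructor
  · refine (integrableOn_exp_mul_Iic hκ 0).congr_fun (fun x hx => ?_) measurableSet_Iic
    simp only [abs_of_nonpos (Set.mem_Iic.mp hx), neg_mul_neg]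
  · refine (integrableOn_exp_mul_Ioi (neg_lt_zero.mpr hκ) 0).congr_fun (fun x hx => ?_)
      measurableSet_Ioi
    simp only [abs_of_pos (Set.mem_Ioi.mp hx)]

theorem aestronglyMeasurable_deriv_of_differentiableAt {α E : Type*} [MeasurableSpace α]
    {μ : Measure α} [NormedAddCommGroup E] [NormedSpace ℂ E] {f : ℂ → α → E} {z₀ : ℂ}
    (hmeas : ∀ᶠ z in 𝓝 z₀, AEStronglyMeasurable (f z) μ)
    (hdiff : ∀ t, DifferentiableAt ℂ (f · t) z₀) :
    AEStronglyMeasurable (fun t => deriv (f · t) z₀) μ := by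
  obtain ⟨r, hr, hball⟩ := Metric.eventually_nhds_iff.mp hmeas
  obtain ⟨u, -, hu, hu_lim⟩ := exists_seq_strictAnti_tendsto' hr
  have hu_punctured : Tendsto (fun n => (u n : ℂ)) atTop (𝓝[≠] 0) :=
    tendsto_nhdsWithin_iff.mpr
      ⟨(continuous_ofReal.tendsto' 0 0 ofReal_zero).comp hu_lim,
        Eventually.of_forall fun n => ofReal_ne_zero.mpr (hu n).1.ne'⟩
  refine aestronglyMeasurable_of_tendsto_ae (u := atTop)
    (f := fun n t => (u n : ℂ)⁻¹ • (f (z₀ + u n) t - f z₀ t)) (fun n => ?_)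
    (Eventually.of_forall fun t =>
      (hasDerivAt_iff_tendsto_slope_zero.mp (hdiff t).hasDerivAt).comp hu_punctured)
  refine AEStronglyMeasurable.const_smul (AEStronglyMeasurable.sub (hball ?_) hmeas.self_of_nhds) _
  simpa [dist_eq_norm, abs_of_pos (hu n).1] using (hu n).2

theorem hasDerivAt_integral_of_dominated_holomorphic {α E : Type*} [MeasurableSpace α]
    {μ : Measure α} [NormedAddCommGroup E] [NormedSpace ℂ E] {f : ℂ → α → E} {g : α → ℝ}
    {z₀ : ℂ} {s : Set ℂ} (hs : s ∈ 𝓝 z₀) (hg : Integrable g μ)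
    (hmeas : ∀ z ∈ s, AEStronglyMeasurable (f z) μ)
    (hdiff : ∀ t, ∀ z ∈ s, DifferentiableAt ℂ (f · t) z)
    (hbound : ∀ z ∈ s, ∀ t, ‖f z t‖ ≤ g t) :
    HasDerivAt (fun z => ∫ t, f z t ∂μ) (∫ t, deriv (f · t) z₀ ∂μ) z₀ := by
  obtain ⟨r, hr, hball⟩ := Metric.mem_nhds_iff.mp hs
  have hz₀ := mem_of_mem_nhds hs
  have hcauchy : ∀ t, ∀ z ∈ Metric.ball z₀ (r / 2), ‖deriv (f · t) z‖ ≤ g t / (r / 4) := by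
    intro t z hz
    have hclosed : Metric.closedBall z (r / 4) ⊆ s := by
      refine (Metric.closedBall_subset_ball' ?_).trans hball
      linarith [Metric.mem_ball.mp hz]
    exact norm_deriv_le_of_forall_mem_sphere_norm_le (by positivity)
      (DifferentiableOn.diffContOnCl_ball
        (fun w hw => (hdiff t w hw).differentiableWithinAt) hclosed)
      fun w hw => hbound w (hclosed (Metric.sphere_subset_closedBall hw)) t
  refine (hasDerivAt_integral_of_dominated_loc_of_deriv_le
    (Metric.ball_mem_nhds z₀ (half_pos hr)) ?_ ?_ ?_
    (Eventually.of_forall hcauchy) (hg.div_const _) ?_).2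
  · filter_upwards [hs] with z hz using hmeas z hz
  · exact hg.mono' (hmeas z₀ hz₀) (Eventually.of_forall (hbound z₀ hz₀))
  · exact aestronglyMeasurable_deriv_of_differentiableAt
      (by filter_upwards [hs] with z hz using hmeas z hz) fun t => hdiff t z₀ hz₀
  · refine Eventually.of_forall fun t z hz => (hdiff t z (hball ?_)).hasDerivAt
    exact Metric.ball_subset_ball (half_le_self hr.le) hz

section Laplace

variable {k : ℝ → ℂ} {A μ : ℝ}

theorem norm_exp_mul_ofReal_mul_le (hbound : ∀ t, ‖k t‖ ≤ A * rexp (-μ * |t|)) {w : ℂ} {ρ : ℝ}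
    (hw : |w.re| ≤ ρ) (t : ℝ) : ‖cexp (w * t) * k t‖ ≤ A * rexp (-(μ - ρ) * |t|) := by
  have hexp : rexp (w.re * t) ≤ rexp (ρ * |t|) := by
    refine Real.exp_le_exp.mpr ((le_abs_self _).trans ?_)
    rw [abs_mul]
    gcongr
  calc ‖cexp (w * t) * k t‖ = rexp (w.re * t) * ‖k t‖ := by
        rw [norm_mul, Complex.norm_exp, re_mul_ofReal]
    _ ≤ rexp (ρ * |t|) * (A * rexp (-μ * |t|)) :=
        mul_le_mul hexp (hbound t) (norm_nonneg _) (Real.exp_pos _).le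
    _ = A * rexp (-(μ - ρ) * |t|) := by
        rw [mul_left_comm, ← Real.exp_add]
        ring_nf

theorem integrable_exp_mul_ofReal_mul (hk : Continuous k)
    (hbound : ∀ t, ‖k t‖ ≤ A * rexp (-μ * |t|)) {w : ℂ} (hw : |w.re| < μ) :
    Integrable fun t : ℝ => cexp (w * t) * k t :=
  ((integrable_exp_neg_mul_abs (sub_pos.mpr hw)).const_mul A).mono'
    (Continuous.aestronglyMeasurable (by fun_prop))
    (Eventually.of_forall (norm_exp_mul_ofReal_mul_le hbound le_rfl))

theorem hasDerivAt_integral_exp_mul_ofReal_mul (hk : Continuous k)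
    (hbound : ∀ t, ‖k t‖ ≤ A * rexp (-μ * |t|)) {w : ℂ} (hw : |w.re| < μ) :
    HasDerivAt (fun w => ∫ t : ℝ, cexp (w * t) * k t) (∫ t : ℝ, t * (cexp (w * t) * k t)) w := by
  obtain ⟨ρ, hwρ, hρμ⟩ := exists_between hw
  have hderiv (z : ℂ) (t : ℝ) :
      HasDerivAt (fun z => cexp (z * t) * k t) (t * (cexp (z * t) * k t)) z :=
    ((hasDerivAt_mul_const (t : ℂ)).cexp.mul_const (k t)).congr_deriv (by ring)
  have hnhds : {z : ℂ | |z.re| < ρ} ∈ 𝓝 w :=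
    (isOpen_lt (by fun_prop) continuous_const).mem_nhds hwρ
  simpa only [(hderiv w _).deriv] using hasDerivAt_integral_of_dominated_holomorphic hnhds
    ((integrable_exp_neg_mul_abs (sub_pos.mpr hρμ)).const_mul A)
    (fun z _ => Continuous.aestronglyMeasurable (by fun_prop))
    (fun t z _ => (hderiv z t).differentiableAt)
    (fun z hz t => norm_exp_mul_ofReal_mul_le hbound hz.le t)

theorem norm_integral_exp_mul_ofReal_mul_le (hbound : ∀ t, ‖k t‖ ≤ A * rexp (-μ * |t|)) {w : ℂ}
    {ρ : ℝ} (hw : |w.re| ≤ ρ) (hρ : ρ < μ) :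
    ‖∫ t : ℝ, cexp (w * t) * k t‖ ≤ ∫ t : ℝ, A * rexp (-(μ - ρ) * |t|) :=
  norm_integral_le_of_norm_le ((integrable_exp_neg_mul_abs (sub_pos.mpr hρ)).const_mul A)
    (Eventually.of_forall (norm_exp_mul_ofReal_mul_le hbound hw))

end Laplace

theorem integral_horizontal_line_eq {h : ℂ → ℂ} {y₀ y₁ C κ : ℝ} (hκ : 0 < κ)
    (hdiff : ∀ z : ℂ, z.im ∈ Set.uIcc y₀ y₁ → DifferentiableAt ℂ h z)
    (hbound : ∀ z : ℂ, z.im ∈ Set.uIcc y₀ y₁ → ‖h z‖ ≤ C * rexp (-κ * |z.re|)) :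
    ∫ x : ℝ, h (x + y₀ * I) = ∫ x : ℝ, h (x + y₁ * I) := by
  have hbound' {y : ℝ} (hy : y ∈ Set.uIcc y₀ y₁) (x : ℝ) :
      ‖h (x + y * I)‖ ≤ C * rexp (-κ * |x|) := by
    simpa using hbound (x + y * I) (by simpa using hy)
  have hlim {y : ℝ} (hy : y ∈ Set.uIcc y₀ y₁) :
      Tendsto (fun R : ℝ => ∫ x in (-R)..R, h (x + y * I)) atTop (𝓝 (∫ x : ℝ, h (x + y * I))) := by
    have hcont : Continuous fun x : ℝ => h (x + y * I) := by
      refine continuous_iff_continuousAt.mpr fun x => ?_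
      exact ContinuousAt.comp (f := fun x : ℝ => (x : ℂ) + y * I)
        (hdiff _ (by simpa using hy)).continuousAt (by fun_prop)
    exact intervalIntegral_tendsto_integral
      (((integrable_exp_neg_mul_abs hκ).const_mul C).mono' hcont.aestronglyMeasurable
        (Eventually.of_forall (hbound' hy))) tendsto_neg_atTop_atBot tendsto_id
  have hside {R x : ℝ} (hx : |x| = R) :
      ‖∫ y in y₀..y₁, h (x + y * I)‖ ≤ C * rexp (-κ * R) * |y₁ - y₀| :=
    intervalIntegral.norm_integral_le_of_norm_le_const fun y hy =>
      hx ▸ hbound' (Set.uIoc_subset_uIcc hy) x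
  have hrect : ∀ᶠ R : ℝ in atTop,
      ‖(∫ x in (-R)..R, h (x + y₀ * I)) - ∫ x in (-R)..R, h (x + y₁ * I)‖ ≤
        2 * (C * rexp (-κ * R) * |y₁ - y₀|) := by
    filter_upwards [eventually_ge_atTop (0 : ℝ)] with R hR
    have hzero := integral_boundary_rect_eq_zero_of_differentiableOn h ⟨-R, y₀⟩ ⟨R, y₁⟩
      fun z hz => (hdiff z hz.2).differentiableWithinAt
    have hdiff_sides : (∫ x in (-R)..R, h (x + y₀ * I)) - ∫ x in (-R)..R, h (x + y₁ * I) =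
        I * (∫ y in y₀..y₁, h (((-R : ℝ) : ℂ) + y * I)) -
          I * ∫ y in y₀..y₁, h ((R : ℝ) + y * I) := by
      simp only [smul_eq_mul] at hzero
      linear_combination hzero
    rw [hdiff_sides]
    refine (norm_sub_le _ _).trans ?_
    rw [norm_mul, norm_mul, norm_I]
    linarith [hside (abs_of_nonneg hR), hside ((abs_neg R).trans (abs_of_nonneg hR))]
  have hdecay : Tendsto (fun R : ℝ => 2 * (C * rexp (-κ * R) * |y₁ - y₀|)) atTop (𝓝 0) := by
    have := Real.tendsto_exp_atBot.comp (tendsto_id.const_mul_atTop_of_neg (neg_lt_zero.mpr hκ))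
    simpa using ((this.const_mul C).mul_const |y₁ - y₀|).const_mul 2
  have := le_of_tendsto_of_tendsto
    ((hlim Set.left_mem_uIcc).sub (hlim Set.right_mem_uIcc)).norm hdecay hrect
  exact sub_eq_zero.mp (norm_le_zero_iff.mp this)

section Strip

variable {H : ℝ}

theorem isOpen_abs_im_lt : IsOpen {z : ℂ | |z.im| < H} :=
  isOpen_lt (continuous_abs.comp continuous_im) continuous_const

theorem convex_abs_im_lt : Convex ℝ {z : ℂ | |z.im| < H} := by
  simp only [abs_lt]
  exact (convex_halfSpace_im_gt _).inter (convex_halfSpace_im_lt _)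

theorem eqOn_strip_of_frequently_eq {f g : ℂ → ℂ} {z₀ : ℂ}
    (hf : ∀ z : ℂ, |z.im| < H → DifferentiableAt ℂ f z)
    (hg : ∀ z : ℂ, |z.im| < H → DifferentiableAt ℂ g z) (hz₀ : |z₀.im| < H)
    (hfg : ∃ᶠ z in 𝓝[≠] z₀, f z = g z) : Set.EqOn f g {z | |z.im| < H} :=
  AnalyticOnNhd.eqOn_of_preconnected_of_frequently_eq
    (DifferentiableOn.analyticOnNhd (fun z hz => (hf z hz).differentiableWithinAt)
      isOpen_abs_im_lt)
    (DifferentiableOn.analyticOnNhd (fun z hz => (hg z hz).differentiableWithinAt)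
      isOpen_abs_im_lt)
    convex_abs_im_lt.isPreconnected hz₀ hfg

theorem eq_on_strip_of_deriv_eq_zero {f : ℂ → ℂ} (hf : ∀ z : ℂ, |z.im| < H → HasDerivAt f 0 z)
    {z w : ℂ} (hz : |z.im| < H) (hw : |w.im| < H) : f z = f w :=
  isOpen_abs_im_lt.is_const_of_deriv_eq_zero convex_abs_im_lt.isPreconnected
    (fun u hu => (hf u hu).differentiableAt.differentiableWithinAt)
    (fun u hu => (hf u hu).deriv) hz hw

end Strip

/-! ### Periodic functions on a strip -/

theorem eq_of_isLittleO_inv_zero_of_isLittleO_cocompact {g : ℂ → ℂ}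
    (hdiff : ∀ q ≠ 0, DifferentiableAt ℂ g q) (hzero : g =o[𝓝[≠] 0] (·⁻¹ : ℂ → ℂ))
    (hinfty : g =o[cocompact ℂ] (id : ℂ → ℂ)) {p q : ℂ} (hp : p ≠ 0) (hq : q ≠ 0) :
    g p = g q := by
  have hsub : (fun q => g q - g 0) =o[𝓝[≠] 0] fun q => (q - 0)⁻¹ := by
    simp only [sub_zero]
    exact hzero.sub (Asymptotics.isLittleO_const_left.mpr
      (Or.inr tendsto_norm_inv_nhdsNE_zero_atTop))
  set G := Function.update g 0 (limUnder (𝓝[≠] 0) g)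
  have hGg {q : ℂ} (hq : q ≠ 0) : G q = g q := Function.update_of_ne hq _ _
  have hG : Differentiable ℂ G := differentiableOn_univ.mp <|
    differentiableOn_update_limUnder_of_isLittleO univ_mem
      (fun q hq => (hdiff q (by simpa using hq)).differentiableWithinAt) hsub
  have hslope : Differentiable ℂ (dslope G 0) :=
    differentiableOn_univ.mp ((differentiableOn_dslope univ_mem).mpr hG.differentiableOn)
  have hslope_lim : Tendsto (dslope G 0) (cocompact ℂ) (𝓝 0) := by
    have hlim : Tendsto (fun q => (g q - G 0) / id q) (cocompact ℂ) (𝓝 0) :=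
      (hinfty.sub (Asymptotics.isLittleO_const_left.mpr
        (Or.inr tendsto_norm_cocompact_atTop))).tendsto_div_nhds_zero
    refine hlim.congr' ?_
    filter_upwards [(Set.finite_singleton (0 : ℂ)).isCompact.compl_mem_cocompact] with q hq
    rw [dslope_of_ne _ hq, slope_def_field, hGg hq, sub_zero, id]
  have hG_const (q : ℂ) : G q = G 0 := by
    have := sub_smul_dslope G 0 q
    rw [hslope.apply_eq_of_tendsto_cocompact q hslope_lim, smul_zero] at this
    exact sub_eq_zero.mp this.symm
  rw [← hGg hp, ← hGg hq, hG_const p, hG_const q]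

theorem isLittleO_inv_nhdsNE_zero_of_norm_le {g : ℂ → ℂ} {C σ : ℝ} (hσ : σ < 1)
    (hbound : ∀ q ≠ 0, ‖g q‖ ≤ C * rexp (σ * |Real.log ‖q‖|)) :
    g =o[𝓝[≠] 0] (·⁻¹ : ℂ → ℂ) := by
  have hO : g =O[𝓝[≠] 0] fun q => rexp (-σ * Real.log ‖q‖) := by
    refine Asymptotics.IsBigO.of_bound C ?_
    filter_upwards [self_mem_nhdsWithin, nhdsWithin_le_nhds (Metric.ball_mem_nhds 0 one_pos)]
      with q hq0 hq1
    convert hbound q hq0 using 2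
    rw [abs_of_nonpos (Real.log_nonpos (norm_nonneg q) (mem_ball_zero_iff.mp hq1).le),
      Real.norm_of_nonneg (Real.exp_pos _).le, neg_mul, mul_neg]
  have ho : (fun q : ℂ => rexp (-σ * Real.log ‖q‖)) =o[𝓝[≠] 0]
      fun q => rexp (-Real.log ‖q‖) := by
    refine Real.isLittleO_exp_comp_exp_comp.mpr ?_
    refine (tendsto_neg_atBot_atTop.comp (Real.tendsto_log_nhdsGT_zero.comp
      tendsto_norm_nhdsNE_zero)).const_mul_atTop (sub_pos.mpr hσ) |>.congr fun q => ?_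
    simp only [Function.comp_apply]
    ring
  refine hO.trans_isLittleO (ho.congr' .rfl ?_).of_norm_right
  filter_upwards [self_mem_nhdsWithin] with q hq0
  rw [Real.exp_neg, Real.exp_log (norm_pos_iff.mpr hq0), norm_inv]

theorem isLittleO_id_cocompact_of_norm_le {g : ℂ → ℂ} {C σ : ℝ} (hσ : σ < 1)
    (hbound : ∀ q ≠ 0, ‖g q‖ ≤ C * rexp (σ * |Real.log ‖q‖|)) :
    g =o[cocompact ℂ] (id : ℂ → ℂ) := by
  have hlarge : ∀ᶠ q : ℂ in cocompact ℂ, 1 < ‖q‖ :=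
    tendsto_norm_cocompact_atTop.eventually (eventually_gt_atTop 1)
  have hO : g =O[cocompact ℂ] fun q => rexp (σ * Real.log ‖q‖) := by
    refine Asymptotics.IsBigO.of_bound C ?_
    filter_upwards [hlarge] with q hq1
    convert hbound q (norm_pos_iff.mp (one_pos.trans hq1)) using 2
    rw [abs_of_pos (Real.log_pos hq1), Real.norm_of_nonneg (Real.exp_pos _).le]
  have ho : (fun q : ℂ => rexp (σ * Real.log ‖q‖)) =o[cocompact ℂ]
      fun q => rexp (Real.log ‖q‖) := by
    refine Real.isLittleO_exp_comp_exp_comp.mpr ?_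
    refine (Real.tendsto_log_atTop.comp tendsto_norm_cocompact_atTop).const_mul_atTop
      (sub_pos.mpr hσ) |>.congr fun q => ?_
    simp only [Function.comp_apply]
    ring
  refine hO.trans_isLittleO (ho.congr' .rfl ?_).of_norm_right
  filter_upwards [hlarge] with q hq1
  rw [Real.exp_log (one_pos.trans hq1), id]

theorem eq_of_norm_le_exp_mul_abs_log_norm {g : ℂ → ℂ} {C σ : ℝ} (hσ : σ < 1)
    (hdiff : ∀ q ≠ 0, DifferentiableAt ℂ g q)
    (hbound : ∀ q ≠ 0, ‖g q‖ ≤ C * rexp (σ * |Real.log ‖q‖|)) {p q : ℂ} (hp : p ≠ 0)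
    (hq : q ≠ 0) : g p = g q :=
  eq_of_isLittleO_inv_zero_of_isLittleO_cocompact hdiff
    (isLittleO_inv_nhdsNE_zero_of_norm_le hσ hbound) (isLittleO_id_cocompact_of_norm_le hσ hbound)
    hp hq

theorem log_eq_log_neg_add_or_sub {q : ℂ} (hq : q ≠ 0) :
    Complex.log q = Complex.log (-q) + π * I ∨ Complex.log q = Complex.log (-q) - π * I := by
  have harg : arg (-q) = arg q - π ∨ arg (-q) = arg q + π := by
    rw [arg_neg_eq_arg_sub_pi_iff, arg_neg_eq_arg_add_pi_iff]
    grind [Complex.ext_iff, zero_re, zero_im]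
  refine harg.imp (fun h => ?_) fun h => ?_ <;>
  · rw [Complex.log, Complex.log, norm_neg, h]
    push_cast
    ring

theorem differentiableAt_comp_log_of_periodic {f : ℂ → ℂ} {H c : ℝ} (hc : 0 < c)
    (hcH : c * π < H) (hdiff : ∀ z : ℂ, |z.im| < H → DifferentiableAt ℂ f z)
    (hper : ∀ z : ℂ, |z.im| < H - c * π → f (z + c * π * I) = f (z - c * π * I)) {q : ℂ}
    (hq : q ≠ 0) : DifferentiableAt ℂ (fun q => f (c * Complex.log q)) q := by
  have hslit {q : ℂ} (hq : q ∈ slitPlane) : DifferentiableAt ℂ (fun q => c * Complex.log q) q :=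
    (differentiableAt_log hq).const_mul _
  by_cases hq' : q ∈ slitPlane
  · refine (hdiff _ ?_).comp q (hslit hq')
    rw [im_ofReal_mul, log_im, abs_mul, abs_of_pos hc]
    exact (mul_le_mul_of_nonneg_left (abs_arg_le_pi q) hc.le).trans_lt hcH
  -- On the cut of the logarithm, periodicity lets us use the branch `log (-q) + π * I` instead.
  have hlog_neg {q : ℂ} (hq : q ≠ 0) (hq' : |(c * Complex.log (-q)).im| < H - c * π) :
      f (c * Complex.log q) = f (c * Complex.log (-q) + c * π * I) := by
    rcases log_eq_log_neg_add_or_sub hq with h | h <;> rw [h]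
    · ring_nf
    · rw [hper _ hq']
      ring_nf
  have harg : (c * Complex.log (-q)).im = 0 := by
    rw [mem_slitPlane_iff, not_or, not_lt, not_not] at hq'
    rw [im_ofReal_mul, log_im, arg_eq_zero_iff.mpr, mul_zero]
    simpa using hq'
  have hneg : DifferentiableAt ℂ (fun p => c * Complex.log (-p)) q :=
    (hslit ((mem_slitPlane_or_neg_mem_slitPlane hq).resolve_left hq')).comp q
      differentiableAt_id.neg
  have hnear : ∀ᶠ p in 𝓝 q, |(c * Complex.log (-p)).im| < H - c * π := by
    refine (continuous_abs.continuousAt.comp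
      (continuous_im.continuousAt.comp hneg.continuousAt)).eventually_lt_const ?_
    simpa [harg] using hcH
  have hbranch : DifferentiableAt ℂ (fun p => f (c * Complex.log (-p) + c * π * I)) q := by
    refine (hdiff _ ?_).comp q (hneg.add_const _)
    rw [add_im, harg]
    simpa [abs_of_pos hc, abs_of_pos pi_pos] using hcH
  refine hbranch.congr_of_eventuallyEq ?_
  filter_upwards [hnear, isOpen_ne.mem_nhds hq] with p hp hp0 using hlog_neg hp0 hp

theorem eq_of_periodic_of_norm_le_exp_of_abs_im_lt {f : ℂ → ℂ} {H β κ C : ℝ} (hβ : 0 < β)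
    (hβH : β / 2 < H) (hκβ : κ * β < 2 * π)
    (hdiff : ∀ z : ℂ, |z.im| < H → DifferentiableAt ℂ f z)
    (hper : ∀ z : ℂ, |z.im| < H - β / 2 → f (z + β / 2 * I) = f (z - β / 2 * I))
    (hbound : ∀ z : ℂ, |z.im| ≤ β / 2 → ‖f z‖ ≤ C * rexp (κ * |z.re|)) {z : ℂ}
    (hz : |z.im| < β / 2) : f z = f 0 := by
  obtain ⟨c, rfl⟩ : ∃ c, β = 2 * (c * π) := ⟨β / (2 * π), by field_simp⟩
  have hc : 0 < c := by
    have := pi_pos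
    by_contra! h
    nlinarith
  simp only [ofReal_mul, ofReal_ofNat, mul_div_cancel_left₀ _ (two_ne_zero' ℝ),
    mul_div_cancel_left₀ _ (two_ne_zero' ℂ)] at *
  have hlog_exp : c * Complex.log (cexp (z / c)) = z := by
    rw [Complex.log_exp, mul_div_cancel₀ _ (ofReal_ne_zero.mpr hc.ne')]
    · rw [div_ofReal_im, lt_div_iff₀ hc]
      linarith [(abs_lt.mp hz).1]
    · rw [div_ofReal_im, div_le_iff₀ hc]
      linarith [(abs_lt.mp hz).2]
  have hconst := eq_of_norm_le_exp_mul_abs_log_norm (g := fun q => f (c * Complex.log q)) (C := C)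
    (σ := κ * c) ?_ (fun q hq => differentiableAt_comp_log_of_periodic hc hβH hdiff hper hq)
    (fun q _ => ?_) (Complex.exp_ne_zero (z / c)) one_ne_zero
  · simpa only [hlog_exp, Complex.log_one, mul_zero] using hconst
  · nlinarith [pi_pos]
  · convert hbound (c * Complex.log q) ?_ using 3
    · rw [re_ofReal_mul, log_re, abs_mul, abs_of_pos hc, mul_assoc]
    · rw [im_ofReal_mul, log_im, abs_mul, abs_of_pos hc]
      exact mul_le_mul_of_nonneg_left (abs_arg_le_pi q) hc.le

theorem eq_of_periodic_of_norm_le_exp {f : ℂ → ℂ} {H β κ C : ℝ} (hβ : 0 < β) (hβH : β / 2 < H)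
    (hκβ : κ * β < 2 * π) (hdiff : ∀ z : ℂ, |z.im| < H → DifferentiableAt ℂ f z)
    (hper : ∀ z : ℂ, |z.im| < H - β / 2 → f (z + β / 2 * I) = f (z - β / 2 * I))
    (hbound : ∀ z : ℂ, |z.im| ≤ β / 2 → ‖f z‖ ≤ C * rexp (κ * |z.re|)) {z : ℂ}
    (hz : |z.im| < H) : f z = f 0 := by
  have hnear : ∀ᶠ w in 𝓝 (0 : ℂ), f w = f 0 := by
    filter_upwards [(isOpen_abs_im_lt (H := β / 2)).mem_nhds (x := (0 : ℂ))
      (by simpa using half_pos hβ)] with w hw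
    exact eq_of_periodic_of_norm_le_exp_of_abs_im_lt hβ hβH hκβ hdiff hper hbound hw
  exact eqOn_strip_of_frequently_eq hdiff (fun _ _ => differentiableAt_const _) (z₀ := 0)
    (by simpa using (half_pos hβ).trans hβH)
    (hnear.filter_mono nhdsWithin_le_nhds).frequently hz

/-! ### Hyperbolic functions -/

theorem exp_abs_le_two_mul_cosh (x : ℝ) : rexp |x| ≤ 2 * Real.cosh x := by
  rw [← Real.cosh_abs, Real.cosh_eq]
  linarith [Real.exp_pos (-|x|)]

theorem abs_sin_im_mul_cosh_re_le_norm_sinh (z : ℂ) :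
    |Real.sin z.im| * Real.cosh z.re ≤ ‖Complex.sinh z‖ := by
  rw [← re_add_im z, Complex.sinh_add, Complex.sinh_mul_I, Complex.cosh_mul_I]
  refine le_trans (le_of_eq ?_) (abs_im_le_norm _)
  simp [abs_mul, ← ofReal_cosh, ← ofReal_sinh, ← ofReal_sin, ← ofReal_cos, mul_comm,
    abs_of_pos (Real.cosh_pos _)]

theorem cosh_ne_zero_of_abs_im_lt {z : ℂ} (hz : |z.im| < π / 2) : Complex.cosh z ≠ 0 := by
  have hre : (Complex.cosh z).re = Real.cosh z.re * Real.cos z.im := by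
    nth_rewrite 1 [← re_add_im z]
    rw [Complex.cosh_add, Complex.cosh_mul_I, Complex.sinh_mul_I]
    simp [← ofReal_cosh, ← ofReal_sinh, ← ofReal_sin, ← ofReal_cos]
  intro h
  rw [h, zero_re] at hre
  have := mul_pos (Real.cosh_pos z.re) (Real.cos_pos_of_mem_Ioo (abs_lt.mp hz))
  linarith

theorem sigmoid_two_mul (y : ℝ) :
    Real.sigmoid (2 * y) = rexp (y - Real.log (2 * Real.cosh y)) := by
  have := Real.cosh_pos y
  rw [Real.exp_sub, Real.exp_log (by positivity), Real.sigmoid_def, Real.cosh_eq]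
  have h : rexp (-(2 * y)) = rexp (-y) / rexp y := by rw [← Real.exp_sub]; ring_nf
  rw [h]
  field_simp

theorem one_sub_sigmoid_two_mul (y : ℝ) :
    1 - Real.sigmoid (2 * y) = Real.sigmoid (2 * -y) := by
  rw [← Real.sigmoid_neg, mul_neg]

theorem integral_Ioo_zero_one_eq_integral_sigmoid {E : Type*} [NormedAddCommGroup E]
    [NormedSpace ℝ E] (f : ℝ → E) :
    ∫ x in Set.Ioo 0 1, f x =
      ∫ y : ℝ, (2 * (Real.sigmoid (2 * y) * Real.sigmoid (2 * -y))) • f (Real.sigmoid (2 * y)) := by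
  have hderiv (y : ℝ) : HasDerivAt (fun y => Real.sigmoid (2 * y))
      (2 * (Real.sigmoid (2 * y) * Real.sigmoid (2 * -y))) y := by
    rw [← one_sub_sigmoid_two_mul]
    exact ((Real.hasDerivAt_sigmoid (2 * y)).comp y (hasDerivAt_const_mul 2)).congr_deriv
      (mul_comm _ _)
  have hinj : Set.InjOn (fun y => Real.sigmoid (2 * y)) Set.univ :=
    (Real.sigmoid_injective.comp (mul_right_injective₀ two_ne_zero)).injOn
  have himage : (fun y => Real.sigmoid (2 * y)) '' Set.univ = Set.Ioo 0 1 := by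
    rw [Set.image_univ, ← Real.range_sigmoid]
    exact (mul_left_surjective₀ two_ne_zero).range_comp Real.sigmoid
  rw [← himage, integral_image_eq_integral_abs_deriv_smul MeasurableSet.univ
    (fun y _ => (hderiv y).hasDerivWithinAt) hinj, setIntegral_univ]
  congr with y
  rw [abs_of_pos (mul_pos two_pos (mul_pos (Real.sigmoid_pos _) (Real.sigmoid_pos _)))]

theorem betaIntegral_one_sub {u : ℂ} (hu : 0 < u.re) (hu' : 0 < (1 - u).re) :
    betaIntegral u (1 - u) = π / Complex.sin (π * u) := by
  have := Complex.Gamma_mul_Gamma_eq_betaIntegral hu hu'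
  rwa [add_sub_cancel, Complex.Gamma_one, one_mul, Complex.Gamma_mul_Gamma_one_sub, eq_comm]
    at this

theorem integral_exp_mul_div_cosh {a : ℂ} (ha : |a.re| < 1) :
    ∫ y : ℝ, cexp (a * y) / Real.cosh y = π / Complex.cos (π * a / 2) := by
  set u := (1 + a) / 2
  have hu : 0 < u.re := by simp [u, ← neg_lt_iff_pos_add', (abs_lt.mp ha).1]
  have hu' : 0 < (1 - u).re := by
    have := (abs_lt.mp ha).2
    simp only [u, sub_re, one_re, div_ofNat_re, add_re]
    linarith
  have hsin : Complex.sin (π * u) = Complex.cos (π * a / 2) := by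
    rw [← Complex.sin_add_pi_div_two]
    congr 1
    ring
  rw [← hsin, ← betaIntegral_one_sub hu hu', betaIntegral,
    intervalIntegral.integral_of_le zero_le_one, integral_Ioc_eq_integral_Ioo,
    integral_Ioo_zero_one_eq_integral_sigmoid]
  congr with y
  have hexp_neg_log : cexp (-Real.log (2 * Real.cosh y)) = (2 * Complex.cosh y)⁻¹ := by
    rw [← ofReal_neg, ← ofReal_exp, Real.exp_neg, Real.exp_log (by positivity)]
    push_cast
    rfl
  rw [← ofReal_one, ← ofReal_sub, one_sub_sigmoid_two_mul, sigmoid_two_mul, sigmoid_two_mul,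
    Real.cosh_neg]
  simp only [Complex.cpow_def, ofReal_eq_zero, Real.exp_ne_zero, if_false, ← ofReal_log,
    (Real.exp_pos _).le, Real.log_exp, real_smul]
  push_cast
  rw [mul_assoc, ← Complex.exp_add, ← Complex.exp_add, ← Complex.exp_add]
  have hexponent (L : ℂ) : y - L + (-y - L) + ((y - L) * (u - 1) + (-y - L) * (1 - u - 1)) =
      a * y + -L := by
    simp only [u]
    ring
  rw [hexponent, Complex.exp_add, hexp_neg_log]
  ring

/-! ### The quantum dilogarithm for `b ≤ 1` -/

/-- The imaginary part of the purely imaginary number `cb b`. -/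
def cbIm (b : ℝ) : ℝ := (b + b⁻¹) / 2

/-- The point at parameter `t` of the line `Im = π b / 2`, on which `sinh (b⁻¹ T) = i cosh (b⁻¹ t)`;
for `b ≤ 1` this is the contour chosen in the definition of `eb`. -/
def contourPoint (b t : ℝ) : ℂ := t + I * (π * b / 2 : ℝ)

/-- The part of the integrand of `log e_b` that does not depend on the argument. -/
def ebKernel (b t : ℝ) : ℂ :=
  (contourPoint b t * Complex.sinh (b * contourPoint b t) *
    Complex.sinh ((b : ℂ)⁻¹ * contourPoint b t))⁻¹

/-- The logarithm of the quantum dilogarithm, for `b ≤ 1`. -/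
def logEb (b : ℝ) (z : ℂ) : ℂ := 1 / 4 * ∫ t : ℝ, ebIntegrand b (π * b / 2) z t

/-- The difference `logEb b (z - i b / 2) - logEb b (z + i b / 2)`, written as a Laplace
transform. -/
def logEbStep (b : ℝ) (z : ℂ) : ℂ :=
  I / 2 * (cexp (π * b * z) * ∫ t : ℝ,
    cexp (-2 * I * z * t) * (contourPoint b t * Complex.cosh ((b : ℂ)⁻¹ * t))⁻¹)

theorem cb_eq (b : ℝ) : cb b = I * cbIm b := by
  simp only [cb, cbIm]
  push_cast
  ring

section QuantumDilogarithm

variable {b : ℝ}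

theorem re_neg_two_I_mul (z : ℂ) : (-2 * I * z).re = 2 * z.im := by simp

theorem contourPoint_ne_zero (hb : 0 < b) (t : ℝ) : contourPoint b t ≠ 0 := by
  intro h
  have := congrArg Complex.im h
  simp [contourPoint, pi_ne_zero, hb.ne'] at this

theorem norm_contourPoint_ge (hb : 0 < b) (t : ℝ) : π * b / 2 ≤ ‖contourPoint b t‖ := by
  have := abs_im_le_norm (contourPoint b t)
  have h : (contourPoint b t).im = π * b / 2 := by simp [contourPoint]
  rwa [h, abs_of_pos (by positivity)] at this

theorem exp_neg_two_I_mul_contourPoint (z : ℂ) (t : ℝ) :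
    cexp (-2 * I * z * contourPoint b t) = cexp (π * b * z) * cexp (-2 * I * z * t) := by
  rw [← Complex.exp_add, contourPoint]
  congr 1
  push_cast
  linear_combination -π * b * z * I_mul_I

theorem sinh_inv_mul_contourPoint (hb : 0 < b) (t : ℝ) :
    Complex.sinh ((b : ℂ)⁻¹ * contourPoint b t) = I * Complex.cosh ((b : ℂ)⁻¹ * t) := by
  have hb' : (b : ℂ) ≠ 0 := ofReal_ne_zero.mpr hb.ne'
  have h : (b : ℂ)⁻¹ * contourPoint b t = (b : ℂ)⁻¹ * t + π / 2 * I := by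
    rw [contourPoint]
    push_cast
    field_simp
  rw [h, Complex.sinh_add, Complex.cosh_mul_I, Complex.sinh_mul_I, Complex.cos_pi_div_two,
    Complex.sin_pi_div_two]
  ring

theorem norm_cosh_inv_mul_ge (hb : 0 < b) (t : ℝ) :
    rexp (b⁻¹ * |t|) / 2 ≤ ‖Complex.cosh ((b : ℂ)⁻¹ * t)‖ := by
  have h : (b : ℂ)⁻¹ * t = (b⁻¹ * t : ℝ) := by push_cast; rfl
  rw [h, ← ofReal_cosh, norm_real, Real.norm_of_nonneg (Real.cosh_pos _).le]
  have := exp_abs_le_two_mul_cosh (b⁻¹ * t)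
  rw [abs_mul, abs_of_pos (inv_pos.mpr hb)] at this
  linarith

theorem sin_pi_mul_sq_div_two_pos (hb : 0 < b) (hb1 : b ≤ 1) : 0 < Real.sin (π * b ^ 2 / 2) := by
  refine Real.sin_pos_of_pos_of_lt_pi (by positivity) ?_
  have := mul_le_mul_of_nonneg_left (pow_le_one₀ hb.le hb1 : b ^ 2 ≤ 1) pi_pos.le
  linarith [pi_pos]

theorem norm_sinh_mul_contourPoint_ge (hb : 0 < b) (hb1 : b ≤ 1) (t : ℝ) :
    Real.sin (π * b ^ 2 / 2) * (rexp (b * |t|) / 2) ≤ ‖Complex.sinh (b * contourPoint b t)‖ := by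
  have hre : (b * contourPoint b t).re = b * t := by simp [contourPoint]
  have him : (b * contourPoint b t).im = π * b ^ 2 / 2 := by
    simp only [contourPoint, im_ofReal_mul, add_im, ofReal_im, I_mul_im, ofReal_re, zero_add]
    ring
  have hsin := sin_pi_mul_sq_div_two_pos hb hb1
  have hcosh := exp_abs_le_two_mul_cosh (b * t)
  rw [abs_mul, abs_of_pos hb] at hcosh
  refine le_trans ?_ (abs_sin_im_mul_cosh_re_le_norm_sinh _)
  rw [hre, him, abs_of_pos hsin]
  gcongr
  linarith

theorem exists_norm_ebKernel_le (hb : 0 < b) (hb1 : b ≤ 1) :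
    ∃ A, ∀ t, ‖ebKernel b t‖ ≤ A * rexp (-(2 * cbIm b) * |t|) := by
  have hsin := sin_pi_mul_sq_div_two_pos hb hb1
  refine ⟨(π * b / 2 * (Real.sin (π * b ^ 2 / 2) / 2) * (1 / 2))⁻¹, fun t => ?_⟩
  have hexp : rexp (-(2 * cbIm b) * |t|) = (rexp (b * |t|) * rexp (b⁻¹ * |t|))⁻¹ := by
    rw [← Real.exp_add, ← Real.exp_neg, cbIm]
    ring_nf
  rw [ebKernel, norm_inv, hexp, ← mul_inv]
  refine inv_anti₀ (by positivity) ?_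
  rw [norm_mul, norm_mul, sinh_inv_mul_contourPoint hb, norm_mul, norm_I, one_mul]
  calc π * b / 2 * (Real.sin (π * b ^ 2 / 2) / 2) * (1 / 2) *
          (rexp (b * |t|) * rexp (b⁻¹ * |t|))
      = π * b / 2 * (Real.sin (π * b ^ 2 / 2) * (rexp (b * |t|) / 2)) *
          (rexp (b⁻¹ * |t|) / 2) := by ring
    _ ≤ _ := by
      gcongr
      exacts [norm_contourPoint_ge hb t, norm_sinh_mul_contourPoint_ge hb hb1 t,
        norm_cosh_inv_mul_ge hb t]

theorem exists_norm_inv_contourPoint_mul_cosh_le (hb : 0 < b) :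
    ∃ A, ∀ t : ℝ, ‖(contourPoint b t * Complex.cosh ((b : ℂ)⁻¹ * t))⁻¹‖ ≤
      A * rexp (-b⁻¹ * |t|) := by
  refine ⟨(π * b / 2 * (1 / 2))⁻¹, fun t => ?_⟩
  rw [neg_mul, Real.exp_neg, norm_inv, ← mul_inv]
  refine inv_anti₀ (by positivity) ?_
  rw [norm_mul, mul_assoc, one_div_mul_eq_div]
  gcongr
  exacts [norm_contourPoint_ge hb t, norm_cosh_inv_mul_ge hb t]

theorem continuous_contourPoint : Continuous (contourPoint b) := by
  unfold contourPoint
  fun_prop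

theorem cosh_inv_mul_ne_zero (hb : 0 < b) (t : ℝ) : Complex.cosh ((b : ℂ)⁻¹ * t) ≠ 0 :=
  norm_pos_iff.mp (lt_of_lt_of_le (by positivity) (norm_cosh_inv_mul_ge hb t))

theorem sinh_mul_contourPoint_ne_zero (hb : 0 < b) (hb1 : b ≤ 1) (t : ℝ) :
    Complex.sinh (b * contourPoint b t) ≠ 0 :=
  norm_pos_iff.mp (lt_of_lt_of_le
    (mul_pos (sin_pi_mul_sq_div_two_pos hb hb1) (by positivity))
    (norm_sinh_mul_contourPoint_ge hb hb1 t))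

theorem continuous_ebKernel (hb : 0 < b) (hb1 : b ≤ 1) : Continuous (ebKernel b) := by
  have := continuous_contourPoint (b := b)
  refine Continuous.inv₀ (by fun_prop) fun t => mul_ne_zero (mul_ne_zero
    (contourPoint_ne_zero hb t) (sinh_mul_contourPoint_ne_zero hb hb1 t)) ?_
  rw [sinh_inv_mul_contourPoint hb]
  exact mul_ne_zero I_ne_zero (cosh_inv_mul_ne_zero hb t)

theorem continuous_inv_contourPoint_mul_cosh (hb : 0 < b) :
    Continuous fun t : ℝ => (contourPoint b t * Complex.cosh ((b : ℂ)⁻¹ * t))⁻¹ := by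
  have := continuous_contourPoint (b := b)
  exact Continuous.inv₀ (by fun_prop) fun t =>
    mul_ne_zero (contourPoint_ne_zero hb t) (cosh_inv_mul_ne_zero hb t)

theorem ebIntegrand_eq (z : ℂ) (t : ℝ) :
    ebIntegrand b (π * b / 2) z t =
      cexp (π * b * z) * (cexp (-2 * I * z * t) * ebKernel b t) := by
  rw [← mul_assoc, ← exp_neg_two_I_mul_contourPoint]
  rfl

theorem logEb_eq (z : ℂ) :
    logEb b z = 1 / 4 * (cexp (π * b * z) * ∫ t : ℝ, cexp (-2 * I * z * t) * ebKernel b t) := by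
  simp only [logEb, ebIntegrand_eq, integral_const_mul]

theorem abs_re_neg_two_I_mul_lt {z : ℂ} {h : ℝ} (hz : |z.im| < h) :
    |(-2 * I * z).re| < 2 * h := by
  rwa [re_neg_two_I_mul, abs_mul, abs_two, mul_lt_mul_iff_right₀ two_pos]

theorem integrable_ebIntegrand (hb : 0 < b) (hb1 : b ≤ 1) {z : ℂ} (hz : |z.im| < cbIm b) :
    Integrable (ebIntegrand b (π * b / 2) z) := by
  obtain ⟨A, hA⟩ := exists_norm_ebKernel_le hb hb1
  rw [funext (ebIntegrand_eq z)]
  exact (integrable_exp_mul_ofReal_mul (continuous_ebKernel hb hb1) hA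
    (abs_re_neg_two_I_mul_lt hz)).const_mul _

theorem differentiableAt_logEb (hb : 0 < b) (hb1 : b ≤ 1) {z : ℂ} (hz : |z.im| < cbIm b) :
    DifferentiableAt ℂ (logEb b) z := by
  obtain ⟨A, hA⟩ := exists_norm_ebKernel_le hb hb1
  rw [funext logEb_eq]
  have := (hasDerivAt_integral_exp_mul_ofReal_mul (continuous_ebKernel hb hb1) hA
    (abs_re_neg_two_I_mul_lt hz)).differentiableAt.comp z (f := fun z => -2 * I * z) (by fun_prop)
  exact (DifferentiableAt.mul (by fun_prop) this).const_mul _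

theorem exists_norm_logEb_le (hb : 0 < b) (hb1 : b ≤ 1) {η : ℝ} (hη : 0 < η) :
    ∃ K, ∀ z : ℂ, |z.im| ≤ cbIm b - η → ‖logEb b z‖ ≤ K * rexp (π * b * z.re) := by
  obtain ⟨A, hA⟩ := exists_norm_ebKernel_le hb hb1
  refine ⟨1 / 4 * ∫ t : ℝ, A * rexp (-(2 * cbIm b - 2 * (cbIm b - η)) * |t|), fun z hz => ?_⟩
  have hre : |(-2 * I * z).re| ≤ 2 * (cbIm b - η) := by
    rw [re_neg_two_I_mul, abs_mul, abs_two]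
    gcongr
  have hexp : ‖cexp (π * b * z)‖ = rexp (π * b * z.re) := by
    rw [← ofReal_mul, Complex.norm_exp, re_ofReal_mul]
  rw [logEb_eq, norm_mul, norm_mul, hexp, mul_left_comm, mul_comm (rexp _)]
  gcongr
  · norm_num
  · exact norm_integral_exp_mul_ofReal_mul_le hA hre (by linarith)

theorem exp_neg_two_I_mul_sub_exp_neg_two_I_mul (z T : ℂ) :
    cexp (-2 * I * (z - b / 2 * I) * T) - cexp (-2 * I * (z + b / 2 * I) * T) =
      -2 * (cexp (-2 * I * z * T) * Complex.sinh (b * T)) := by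
  have hsub : -2 * I * (z - b / 2 * I) * T = -2 * I * z * T + -(b * T) := by
    linear_combination b * T * I_mul_I
  have hadd : -2 * I * (z + b / 2 * I) * T = -2 * I * z * T + b * T := by
    linear_combination -b * T * I_mul_I
  rw [hsub, hadd, Complex.exp_add, Complex.exp_add, Complex.sinh]
  ring

theorem ebIntegrand_sub_ebIntegrand (hb : 0 < b) (hb1 : b ≤ 1) (z : ℂ) (t : ℝ) :
    ebIntegrand b (π * b / 2) (z - b / 2 * I) t - ebIntegrand b (π * b / 2) (z + b / 2 * I) t =
      2 * I * (cexp (π * b * z) * (cexp (-2 * I * z * t) *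
        (contourPoint b t * Complex.cosh ((b : ℂ)⁻¹ * t))⁻¹)) := by
  have hT := contourPoint_ne_zero hb t
  have hsinh := sinh_mul_contourPoint_ne_zero hb hb1 t
  have hcosh := cosh_inv_mul_ne_zero hb t
  have h (w : ℂ) : ebIntegrand b (π * b / 2) w t = cexp (-2 * I * w * contourPoint b t) /
      (contourPoint b t * Complex.sinh (b * contourPoint b t) *
        Complex.sinh ((b : ℂ)⁻¹ * contourPoint b t)) := rfl
  rw [h, h, ← sub_div, exp_neg_two_I_mul_sub_exp_neg_two_I_mul, sinh_inv_mul_contourPoint hb,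
    exp_neg_two_I_mul_contourPoint]
  generalize contourPoint b t = T at *
  field_simp [hcosh]
  rw [I_sq]
  ring

theorem logEb_sub_logEb (hb : 0 < b) (hb1 : b ≤ 1) {z : ℂ} (hz : |z.im| < b⁻¹ / 2) :
    logEb b (z - b / 2 * I) - logEb b (z + b / 2 * I) = logEbStep b z := by
  have him : ((b : ℂ) / 2 * I).im = b / 2 := by simp
  have hz' := abs_lt.mp hz
  have hsub : |(z - b / 2 * I).im| < cbIm b := by
    rw [sub_im, him, cbIm, abs_lt]
    constructor <;> linarith
  have hadd : |(z + b / 2 * I).im| < cbIm b := by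
    rw [add_im, him, cbIm, abs_lt]
    constructor <;> linarith
  rw [logEb, logEb, ← mul_sub, ← integral_sub (integrable_ebIntegrand hb hb1 hsub)
    (integrable_ebIntegrand hb hb1 hadd)]
  simp only [ebIntegrand_sub_ebIntegrand hb hb1, integral_const_mul, logEbStep]
  ring

end QuantumDilogarithm

section QuantumDilogarithm

variable {b : ℝ}

theorem integral_exp_mul_div_cosh_inv_mul (hb : 0 < b) {z : ℂ} (hz : |z.im| < b⁻¹ / 2) :
    ∫ t : ℝ, cexp (-2 * I * z * t) / Complex.cosh ((b : ℂ)⁻¹ * t) =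
      π * b / Complex.cosh (π * b * z) := by
  have hre : |(b * (-2 * I * z)).re| < 1 := by
    rw [re_ofReal_mul, re_neg_two_I_mul, abs_mul, abs_mul, abs_two, abs_of_pos hb]
    calc b * (2 * |z.im|) < b * (2 * (b⁻¹ / 2)) := by gcongr
      _ = 1 := by field_simp
  have hscale := Measure.integral_comp_mul_left
    (fun y : ℝ => cexp (b * (-2 * I * z) * y) / (Real.cosh y : ℂ)) b⁻¹
  rw [inv_inv, abs_of_pos hb, integral_exp_mul_div_cosh hre] at hscale
  have hcos : Complex.cos (π * (b * (-2 * I * z)) / 2) = Complex.cosh (π * b * z) := by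
    rw [← Complex.cos_mul_I, ← Complex.cos_neg]
    ring_nf
  rw [hcos, real_smul] at hscale
  have hb' : (b : ℂ) ≠ 0 := ofReal_ne_zero.mpr hb.ne'
  convert hscale using 1
  · congr with t
    push_cast
    congr 2
    field_simp
  · ring

theorem cosh_pi_mul_ne_zero (hb : 0 < b) {z : ℂ} (hz : |z.im| < b⁻¹ / 2) :
    Complex.cosh (π * b * z) ≠ 0 := by
  refine cosh_ne_zero_of_abs_im_lt ?_
  rw [← ofReal_mul, im_ofReal_mul, abs_mul, abs_of_pos (by positivity)]
  calc π * b * |z.im| < π * b * (b⁻¹ / 2) := by gcongr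
    _ = π / 2 := by field_simp

theorem integral_ofReal_mul_exp_mul_inv_contourPoint_mul_cosh (hb : 0 < b) {z : ℂ}
    (hz : |z.im| < b⁻¹ / 2) :
    ∫ t : ℝ, t * (cexp (-2 * I * z * t) * (contourPoint b t * Complex.cosh ((b : ℂ)⁻¹ * t))⁻¹) =
      π * b / Complex.cosh (π * b * z) - π * b / 2 * I *
        ∫ t : ℝ, cexp (-2 * I * z * t) * (contourPoint b t * Complex.cosh ((b : ℂ)⁻¹ * t))⁻¹ := by
  obtain ⟨A, hA⟩ := exists_norm_inv_contourPoint_mul_cosh_le hb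
  have hval := integral_exp_mul_div_cosh_inv_mul hb hz
  have hint : Integrable fun t : ℝ => cexp (-2 * I * z * t) / Complex.cosh ((b : ℂ)⁻¹ * t) := by
    refine Integrable.of_integral_ne_zero (hval ▸ div_ne_zero ?_ (cosh_pi_mul_ne_zero hb hz))
    exact mul_ne_zero (ofReal_ne_zero.mpr pi_ne_zero) (ofReal_ne_zero.mpr hb.ne')
  have hint' := integrable_exp_mul_ofReal_mul (continuous_inv_contourPoint_mul_cosh hb) hA
    ((abs_re_neg_two_I_mul_lt hz).trans_eq (by ring))
  rw [← hval, ← integral_const_mul, ← integral_sub hint (hint'.const_mul _)]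
  congr with t
  have hT := contourPoint_ne_zero hb t
  have ht : (t : ℂ) = contourPoint b t - π * b / 2 * I := by
    rw [contourPoint]
    push_cast
    ring
  rw [mul_inv, div_eq_mul_inv]
  linear_combination cexp (-2 * I * z * t) * (contourPoint b t)⁻¹ *
    (Complex.cosh ((b : ℂ)⁻¹ * t))⁻¹ * ht +
    cexp (-2 * I * z * t) * (Complex.cosh ((b : ℂ)⁻¹ * t))⁻¹ * mul_inv_cancel₀ hT

theorem hasDerivAt_logEbStep (hb : 0 < b) {z : ℂ} (hz : |z.im| < b⁻¹ / 2) :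
    HasDerivAt (logEbStep b) (π * b * cexp (π * b * z) / Complex.cosh (π * b * z)) z := by
  obtain ⟨A, hA⟩ := exists_norm_inv_contourPoint_mul_cosh_le hb
  have hlaplace := (hasDerivAt_integral_exp_mul_ofReal_mul
    (continuous_inv_contourPoint_mul_cosh hb) hA
    ((abs_re_neg_two_I_mul_lt hz).trans_eq (by ring))).comp_of_eq z (hasDerivAt_const_mul _) rfl
  have hexp : HasDerivAt (fun z : ℂ => cexp (π * b * z)) (cexp (π * b * z) * (π * b)) z :=
    (hasDerivAt_const_mul _).cexp
  rw [integral_ofReal_mul_exp_mul_inv_contourPoint_mul_cosh hb hz] at hlaplace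
  refine ((hexp.mul hlaplace).const_mul (I / 2)).congr_deriv ?_
  simp only [Function.comp_apply]
  generalize (∫ t : ℝ, cexp (-2 * I * z * t) * _) = J
  linear_combination (-(π * b * cexp (π * b * z) / Complex.cosh (π * b * z)) +
    π * b * cexp (π * b * z) * J * I / 2) * I_sq

theorem logEbStep_sub_logEbStep_neg (hb : 0 < b) {z : ℂ} (hz : |z.im| < b⁻¹ / 2) :
    logEbStep b z - logEbStep b (-z) = 2 * π * b * z := by
  have hderiv (w : ℂ) (hw : |w.im| < b⁻¹ / 2) :
      HasDerivAt (fun w => logEbStep b w - logEbStep b (-w) - 2 * π * b * w) 0 w := by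
    have hneg : |(-w).im| < b⁻¹ / 2 := by rwa [neg_im, abs_neg]
    refine (((hasDerivAt_logEbStep hb hw).sub ((hasDerivAt_logEbStep hb hneg).comp_of_eq w
      (hasDerivAt_neg w) rfl)).sub (hasDerivAt_const_mul _)).congr_deriv ?_
    have hcosh := cosh_pi_mul_ne_zero hb hw
    rw [mul_neg (π * b : ℂ) w, Complex.cosh_neg]
    field_simp
    rw [Complex.cosh]
    ring
  have hzero : |(0 : ℂ).im| < b⁻¹ / 2 := by simpa using hb
  have := eq_on_strip_of_deriv_eq_zero hderiv hz hzero
  simp only [neg_zero, sub_self, mul_zero] at this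
  exact sub_eq_zero.mp this

theorem tendsto_logEbStep_atBot (hb : 0 < b) :
    Tendsto (fun x : ℝ => logEbStep b x) atBot (𝓝 0) := by
  obtain ⟨A, hA⟩ := exists_norm_inv_contourPoint_mul_cosh_le hb
  set K := ∫ t : ℝ, A * rexp (-(b⁻¹ - 0) * |t|)
  refine squeeze_zero_norm (a := fun x => 1 / 2 * (rexp (π * b * x) * K)) (fun x => ?_) ?_
  · have hexp : ‖cexp (π * b * x)‖ = rexp (π * b * x) := by
      rw [← ofReal_mul, ← ofReal_mul, ← ofReal_exp, norm_real, Real.norm_of_nonneg (by positivity)]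
    rw [logEbStep, norm_mul, norm_mul, hexp, norm_div, norm_I, Complex.norm_ofNat]
    gcongr
    exact norm_integral_exp_mul_ofReal_mul_le hA (by simp) (inv_pos.mpr hb)
  · have := Real.tendsto_exp_atBot.comp
      (tendsto_id.const_mul_atBot (mul_pos pi_pos hb))
    simpa only [Function.comp_def, id, zero_mul, mul_zero] using
      (this.mul_const K).const_mul (1 / 2)

theorem exp_logEbStep (hb : 0 < b) {z : ℂ} (hz : |z.im| < b⁻¹ / 2) :
    cexp (logEbStep b z) = 1 + cexp (2 * (π * b * z)) := by
  have hderiv (w : ℂ) (hw : |w.im| < b⁻¹ / 2) :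
      HasDerivAt (fun w => cexp (-logEbStep b w) * (1 + cexp (2 * (π * b * w)))) 0 w := by
    have hcosh := cosh_pi_mul_ne_zero hb hw
    have hexp := (((hasDerivAt_const_mul (x := w) ((π : ℂ) * b)).const_mul 2).cexp).const_add 1
    refine ((hasDerivAt_logEbStep hb hw).neg.cexp.mul hexp).congr_deriv ?_
    have hexp_sq : 2 * Complex.cosh (π * b * w) * cexp (π * b * w) =
        1 + cexp (2 * (π * b * w)) := by
      rw [Complex.cosh, mul_div_cancel₀ _ two_ne_zero, add_mul, ← Complex.exp_add,
        ← Complex.exp_add, neg_add_cancel, Complex.exp_zero, ← two_mul, add_comm]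
    have hexp_two : cexp (2 * (π * b * w)) = cexp (π * b * w) ^ 2 := by
      rw [← Complex.exp_nat_mul, Nat.cast_two]
    rw [← hexp_sq, hexp_two]
    field_simp
    ring
  have hlim : Tendsto (fun x : ℝ => cexp (-logEbStep b x) * (1 + cexp (2 * (π * b * x)))) atBot
      (𝓝 (cexp (-0) * (1 + 0))) := by
    refine ((tendsto_logEbStep_atBot hb).neg.cexp).mul (Tendsto.const_add _ ?_)
    have := (continuous_ofReal.tendsto 0).comp (Real.tendsto_exp_atBot.comp
      (tendsto_id.const_mul_atBot (mul_pos two_pos (mul_pos pi_pos hb))))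
    refine this.congr fun x => ?_
    simp only [Function.comp_apply, id]
    push_cast
    ring_nf
  have hconst (x : ℝ) := eq_on_strip_of_deriv_eq_zero hderiv (z := x) (by simpa using hb) hz
  have := tendsto_nhds_unique (hlim.congr hconst) tendsto_const_nhds
  rw [neg_zero, Complex.exp_zero, add_zero, one_mul, Complex.exp_neg] at this
  exact (inv_mul_eq_one₀ (Complex.exp_ne_zero _)).mp this.symm

end QuantumDilogarithm

/-- The defect in the reflection formula for `logEb`, an `i b`-periodic function. -/
def logEbDefect (b : ℝ) (z : ℂ) : ℂ := logEb b z + logEb b (-z) - π * I * z ^ 2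

section QuantumDilogarithm

variable {b : ℝ}

theorem cbIm_pos (hb : 0 < b) : 0 < cbIm b := by
  unfold cbIm
  positivity

theorem differentiableAt_logEbDefect (hb : 0 < b) (hb1 : b ≤ 1) {z : ℂ} (hz : |z.im| < cbIm b) :
    DifferentiableAt ℂ (logEbDefect b) z := by
  have hneg : |(-z).im| < cbIm b := by rwa [neg_im, abs_neg]
  have hlog := differentiableAt_logEb hb hb1 hz
  have hlog_neg := (differentiableAt_logEb hb hb1 hneg).hasDerivAt.comp z (hasDerivAt_neg z)
    |>.differentiableAt
  rw [Function.comp_def] at hlog_neg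
  unfold logEbDefect
  fun_prop

theorem logEbDefect_periodic (hb : 0 < b) (hb1 : b ≤ 1) {z : ℂ} (hz : |z.im| < b⁻¹ / 2) :
    logEbDefect b (z + b / 2 * I) = logEbDefect b (z - b / 2 * I) := by
  have hneg : |(-z).im| < b⁻¹ / 2 := by rwa [neg_im, abs_neg]
  have hz_step := logEb_sub_logEb hb hb1 hz
  have hneg_step := logEb_sub_logEb hb hb1 hneg
  have hstep := logEbStep_sub_logEbStep_neg hb hz
  rw [neg_add_eq_sub] at hneg_step
  rw [logEbDefect, logEbDefect, neg_add', neg_sub]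
  linear_combination hneg_step - hz_step - hstep - 2 * π * z * b * I_sq

theorem exists_norm_sq_le_exp {κ : ℝ} (hκ : 0 < κ) (h : ℝ) :
    ∃ C, ∀ z : ℂ, |z.im| ≤ h → ‖z ^ 2‖ ≤ C * rexp (κ * |z.re|) := by
  refine ⟨2 / κ ^ 2 + h ^ 2, fun z hz => ?_⟩
  have hexp := Real.quadratic_le_exp_of_nonneg (x := κ * |z.re|) (by positivity)
  have hone : 1 ≤ rexp (κ * |z.re|) := Real.one_le_exp (by positivity)
  have hre : |z.re| ^ 2 ≤ 2 / κ ^ 2 * rexp (κ * |z.re|) := by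
    rw [div_mul_eq_mul_div, le_div_iff₀ (by positivity)]
    linarith [show 0 ≤ κ * |z.re| by positivity]
  have him : |z.im| ^ 2 ≤ h ^ 2 * rexp (κ * |z.re|) :=
    (pow_le_pow_left₀ (abs_nonneg _) hz 2).trans (le_mul_of_one_le_right (by positivity) hone)
  rw [norm_pow, ← normSq_eq_norm_sq, normSq_apply, add_mul, ← abs_mul_abs_self, ← pow_two,
    ← abs_mul_abs_self z.im, ← pow_two]
  exact add_le_add hre him

theorem exists_norm_logEbDefect_le (hb : 0 < b) (hb1 : b ≤ 1) :
    ∃ C, ∀ z : ℂ, |z.im| ≤ b / 2 → ‖logEbDefect b z‖ ≤ C * rexp (π * b * |z.re|) := by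
  obtain ⟨K, hK⟩ := exists_norm_logEb_le hb hb1 (η := b⁻¹ / 2) (by positivity)
  have him : cbIm b - b⁻¹ / 2 = b / 2 := by
    rw [cbIm]
    ring
  rw [him] at hK
  have hK0 : 0 ≤ K := by
    have := (norm_nonneg _).trans (hK 0 (by simpa using (half_pos hb).le))
    exact nonneg_of_mul_nonneg_left this (Real.exp_pos _)
  obtain ⟨A, hA⟩ := exists_norm_sq_le_exp (mul_pos pi_pos hb) (b / 2)
  refine ⟨K + K + π * A, fun z hz => ?_⟩
  have hlog (w : ℂ) (him : |w.im| ≤ b / 2) (hre : w.re ≤ |z.re|) :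
      ‖logEb b w‖ ≤ K * rexp (π * b * |z.re|) := (hK w him).trans (by gcongr)
  have hquad : ‖π * I * z ^ 2‖ ≤ π * A * rexp (π * b * |z.re|) := by
    rw [norm_mul, norm_mul, norm_I, mul_one, norm_real, Real.norm_of_nonneg pi_pos.le, mul_assoc]
    gcongr
    exact hA z hz
  rw [add_mul, add_mul]
  refine (norm_sub_le _ _).trans (add_le_add ((norm_add_le _ _).trans (add_le_add ?_ ?_)) hquad)
  · exact hlog z hz (le_abs_self _)
  · exact hlog (-z) (by rwa [neg_im, abs_neg]) (neg_le_abs _)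

theorem logEb_add_logEb_neg (hb : 0 < b) (hb1 : b ≤ 1) {z : ℂ} (hz : |z.im| < cbIm b) :
    logEb b z + logEb b (-z) = π * I * z ^ 2 + 2 * logEb b 0 := by
  obtain ⟨C, hC⟩ := exists_norm_logEbDefect_le hb hb1
  have hH : b / 2 < cbIm b := by
    have := inv_pos.mpr hb
    unfold cbIm
    linarith
  have hκ : π * b * b < 2 * π := by nlinarith [pi_pos, mul_le_one₀ hb1 hb.le hb1]
  have hconst := eq_of_periodic_of_norm_le_exp hb hH hκ
    (fun w hw => differentiableAt_logEbDefect hb hb1 hw)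
    (fun w hw => logEbDefect_periodic hb hb1 (hw.trans_eq (by rw [cbIm]; ring))) hC hz
  simp only [logEbDefect, neg_zero] at hconst
  linear_combination hconst

/-! ### The function `w_b` for `b ≤ 1` -/

theorem wb_ne_zero (z : ℂ) : wb b z ≠ 0 :=
  div_ne_zero (mul_ne_zero (Complex.exp_ne_zero _) (Complex.exp_ne_zero _)) (Complex.exp_ne_zero _)

theorem wb_eq (hb : 0 < b) (hb1 : b ≤ 1) (z : ℂ) :
    wb b z = wb b 0 * cexp (π * I * z ^ 2 / 2 + logEb b 0 - logEb b z) := by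
  have heb (z : ℂ) : eb b z = cexp (logEb b z) := by
    rw [eb, min_eq_left (hb1.trans ((one_le_inv₀ hb).mpr hb1))]
    rfl
  simp only [wb, heb, Complex.exp_sub, Complex.exp_add]
  rw [zero_pow two_ne_zero, mul_zero, zero_div, Complex.exp_zero]
  have := Complex.exp_ne_zero (logEb b 0)
  field_simp

theorem differentiableAt_wb (hb : 0 < b) (hb1 : b ≤ 1) {z : ℂ} (hz : |z.im| < cbIm b) :
    DifferentiableAt ℂ (wb b) z := by
  have := differentiableAt_logEb hb hb1 hz
  rw [funext (wb_eq hb hb1)]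
  fun_prop

theorem wb_mul_wb_neg (hb : 0 < b) (hb1 : b ≤ 1) {z : ℂ} (hz : |z.im| < cbIm b) :
    wb b z * wb b (-z) = wb b 0 ^ 2 := by
  have hexp : (π * I * z ^ 2 / 2 + logEb b 0 - logEb b z) +
      (π * I * (-z) ^ 2 / 2 + logEb b 0 - logEb b (-z)) = 0 := by
    linear_combination -logEb_add_logEb_neg hb hb1 hz
  rw [wb_eq hb hb1 z, wb_eq hb hb1 (-z), mul_mul_mul_comm, ← Complex.exp_add, hexp,
    Complex.exp_zero, mul_one, pow_two]

theorem wb_add_half_mul_I (hb : 0 < b) (hb1 : b ≤ 1) {z : ℂ} (hz : |z.im| < b⁻¹ / 2) :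
    wb b (z + b / 2 * I) = 2 * Complex.cosh (π * b * z) * wb b (z - b / 2 * I) := by
  have hcosh : 2 * Complex.cosh (π * b * z) =
      cexp (-(π * b * z)) * cexp (logEb b (z - b / 2 * I) - logEb b (z + b / 2 * I)) := by
    rw [logEb_sub_logEb hb hb1 hz, exp_logEbStep hb hz, Complex.two_cosh, mul_add,
      ← Complex.exp_add, mul_one, add_comm]
    ring_nf
  rw [hcosh, wb_eq hb hb1 (z + b / 2 * I), wb_eq hb hb1 (z - b / 2 * I), mul_left_comm,
    ← Complex.exp_add, ← Complex.exp_add]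
  congr 2
  linear_combination π * b * z * I_sq

theorem exists_abs_log_norm_wb_sub_le_of_re_nonpos (hb : 0 < b) (hb1 : b ≤ 1) {η : ℝ}
    (hη : 0 < η) : ∃ K, ∀ z : ℂ, |z.im| ≤ cbIm b - η → z.re ≤ 0 →
      |Real.log ‖wb b z‖ - π * |z.re| * z.im| ≤ K := by
  obtain ⟨K, hK⟩ := exists_norm_logEb_le hb hb1 hη
  refine ⟨|Real.log ‖wb b 0‖| + (‖logEb b 0‖ + |K|), fun z hz hre => ?_⟩
  have hlog : ‖logEb b z‖ ≤ |K| := by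
    refine ((hK z hz).trans (mul_le_mul_of_nonneg_right (le_abs_self K)
      (Real.exp_pos _).le)).trans (mul_le_of_le_one_right (abs_nonneg K) ?_)
    exact Real.exp_le_one_iff.mpr (mul_nonpos_of_nonneg_of_nonpos (by positivity) hre)
  have hquad : (π * I * z ^ 2 / 2 : ℂ).re = π * |z.re| * z.im := by
    rw [abs_of_nonpos hre]
    simp [pow_two]
    ring
  have heq : Real.log ‖wb b z‖ - π * |z.re| * z.im =
      Real.log ‖wb b 0‖ + (logEb b 0 - logEb b z).re := by
    rw [wb_eq hb hb1 z, norm_mul, Complex.norm_exp, Real.log_mul (norm_ne_zero_iff.mpr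
      (wb_ne_zero 0)) (Real.exp_ne_zero _), Real.log_exp, add_sub_assoc (π * I * z ^ 2 / 2),
      add_re, hquad]
    ring
  rw [heq]
  refine (abs_add_le _ _).trans (add_le_add_right ?_ _)
  exact (abs_re_le_norm _).trans ((norm_sub_le _ _).trans (by gcongr))

theorem exists_abs_log_norm_wb_sub_le (hb : 0 < b) (hb1 : b ≤ 1) {η : ℝ} (hη : 0 < η) :
    ∃ K, ∀ z : ℂ, |z.im| ≤ cbIm b - η → |Real.log ‖wb b z‖ - π * |z.re| * z.im| ≤ K := by
  obtain ⟨K, hK⟩ := exists_abs_log_norm_wb_sub_le_of_re_nonpos hb hb1 hη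
  set L := Real.log ‖wb b 0‖
  refine ⟨K + 2 * |L|, fun z hz => ?_⟩
  rcases le_total z.re 0 with hre | hre
  · linarith [hK z hz hre, abs_nonneg L]
  · have h := hK (-z) (by rwa [neg_im, abs_neg]) (by simpa using hre)
    have hlog_neg : Real.log ‖wb b z‖ + Real.log ‖wb b (-z)‖ = 2 * L := by
      rw [← Real.log_mul (norm_ne_zero_iff.mpr (wb_ne_zero _))
        (norm_ne_zero_iff.mpr (wb_ne_zero _)), ← norm_mul, wb_mul_wb_neg hb hb1 (by linarith),
        norm_pow, Real.log_pow, Nat.cast_two]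
    rw [neg_re, neg_im, abs_neg, abs_le] at h
    have hL := abs_le.mp (le_refl |L|)
    rw [abs_le]
    constructor <;> linarith

end QuantumDilogarithm

/-! ### The function `D` at shifted parameters -/

/-- The function `D_α` at `α = (a - c_b) / 2`. In this normalization it is regular on the real line
for `|Im a| < |c_b|`, and its Fourier transform is a multiple of the one with parameter `-a`. -/
def Dshift (b : ℝ) (a x : ℂ) : ℂ := Dfun b ((a - cb b) / 2) x

section Dshift

variable {b : ℝ} {a x : ℂ}

theorem re_add_half_sub_cb : (x + (a - cb b) / 2).re = x.re + a.re / 2 := by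
  simp [cb_eq]

theorem re_sub_half_sub_cb : (x - (a - cb b) / 2).re = x.re - a.re / 2 := by
  simp [cb_eq]

theorem im_add_half_sub_cb : (x + (a - cb b) / 2).im = x.im - (cbIm b - a.im) / 2 := by
  simp [cb_eq]
  ring

theorem im_sub_half_sub_cb : (x - (a - cb b) / 2).im = x.im + (cbIm b - a.im) / 2 := by
  simp [cb_eq]
  ring

theorem abs_im_add_half_sub_cb_le :
    |(x + (a - cb b) / 2).im| ≤ |x.im| + |cbIm b - a.im| / 2 := by
  rw [im_add_half_sub_cb]
  exact (abs_sub _ _).trans_eq (by rw [abs_div, abs_two])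

theorem abs_im_sub_half_sub_cb_le :
    |(x - (a - cb b) / 2).im| ≤ |x.im| + |cbIm b - a.im| / 2 := by
  rw [im_sub_half_sub_cb]
  exact (abs_add_le _ _).trans_eq (by rw [abs_div, abs_two])

theorem Dshift_ne_zero : Dshift b a x ≠ 0 := div_ne_zero (wb_ne_zero _) (wb_ne_zero _)

theorem differentiableAt_Dshift (hb : 0 < b) (hb1 : b ≤ 1)
    (h : |x.im| + |cbIm b - a.im| / 2 < cbIm b) : DifferentiableAt ℂ (Dshift b a) x := by
  have hadd := differentiableAt_wb hb hb1 (abs_im_add_half_sub_cb_le.trans_lt h)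
  have hsub := differentiableAt_wb hb hb1 (abs_im_sub_half_sub_cb_le.trans_lt h)
  exact (hadd.comp (f := (· + (a - cb b) / 2)) x (by fun_prop)).div
    (hsub.comp (f := (· - (a - cb b) / 2)) x (by fun_prop)) (wb_ne_zero _)

theorem differentiableAt_Dshift_param (hb : 0 < b) (hb1 : b ≤ 1)
    (h : |x.im| + |cbIm b - a.im| / 2 < cbIm b) : DifferentiableAt ℂ (Dshift b · x) a := by
  have hadd := differentiableAt_wb hb hb1 (abs_im_add_half_sub_cb_le.trans_lt h)
  have hsub := differentiableAt_wb hb hb1 (abs_im_sub_half_sub_cb_le.trans_lt h)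
  exact (hadd.comp (f := fun a => x + (a - cb b) / 2) a (by fun_prop)).div
    (hsub.comp (f := fun a => x - (a - cb b) / 2) a (by fun_prop)) (wb_ne_zero _)

theorem Dshift_neg (hb : 0 < b) (hb1 : b ≤ 1) (h : |x.im| + |cbIm b - a.im| / 2 < cbIm b) :
    Dshift b a (-x) = Dshift b a x := by
  have hadd := wb_mul_wb_neg hb hb1 (abs_im_add_half_sub_cb_le.trans_lt h)
  have hsub := wb_mul_wb_neg hb hb1 (abs_im_sub_half_sub_cb_le.trans_lt h)
  rw [Dshift, Dshift, Dfun, Dfun, div_eq_div_iff (wb_ne_zero _) (wb_ne_zero _), neg_add_eq_sub,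
    ← neg_sub x, ← neg_add', mul_comm, hsub, hadd]

theorem exists_abs_add_log_norm_Dshift_le (hb : 0 < b) (hb1 : b ≤ 1) {η : ℝ} (hη : 0 < η) :
    ∃ K, ∀ a x : ℂ, |x.im| + |cbIm b - a.im| / 2 ≤ cbIm b - η →
      |π * (cbIm b - a.im) * |x.re| + Real.log ‖Dshift b a x‖| ≤
        K + π * (|x.im| + |cbIm b - a.im| / 2) * |a.re| := by
  obtain ⟨K, hK⟩ := exists_abs_log_norm_wb_sub_le hb hb1 hη
  refine ⟨K + K, fun a x h => ?_⟩
  have hadd := hK _ (abs_im_add_half_sub_cb_le.trans h)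
  have hsub := hK _ (abs_im_sub_half_sub_cb_le.trans h)
  have herr (u v : ℝ) (hu : |u - x.re| = |a.re| / 2) (hv : |v| ≤ |x.im| + |cbIm b - a.im| / 2) :
      |(|u| - |x.re|) * v| ≤ |a.re| / 2 * (|x.im| + |cbIm b - a.im| / 2) := by
    rw [abs_mul]
    have := (abs_abs_sub_abs_le_abs_sub u x.re).trans_eq hu
    gcongr
  have herr_add := herr (x.re + a.re / 2) _
    (by rw [add_sub_cancel_left, abs_div, abs_two]) abs_im_add_half_sub_cb_le
  have herr_sub := herr (x.re - a.re / 2) _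
    (by rw [sub_sub_cancel_left, abs_neg, abs_div, abs_two]) abs_im_sub_half_sub_cb_le
  rw [re_add_half_sub_cb] at hadd
  rw [re_sub_half_sub_cb] at hsub
  rw [im_add_half_sub_cb] at hadd herr_add
  rw [im_sub_half_sub_cb] at hsub herr_sub
  rw [Dshift, Dfun, norm_div, Real.log_div (norm_ne_zero_iff.mpr (wb_ne_zero _))
    (norm_ne_zero_iff.mpr (wb_ne_zero _))]
  have hadd_pi := abs_le.mp (abs_mul π _ ▸ mul_le_mul_of_nonneg_left herr_add (abs_nonneg π))
  have hsub_pi := abs_le.mp (abs_mul π _ ▸ mul_le_mul_of_nonneg_left herr_sub (abs_nonneg π))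
  rw [abs_of_pos pi_pos] at hadd_pi hsub_pi
  rw [abs_le] at hadd hsub ⊢
  constructor <;> linarith

theorem exists_norm_Dshift_le (hb : 0 < b) (hb1 : b ≤ 1) {η : ℝ} (hη : 0 < η) :
    ∃ K, ∀ a x : ℂ, |x.im| + |cbIm b - a.im| / 2 ≤ cbIm b - η →
      ‖Dshift b a x‖ ≤ rexp (K + π * (|x.im| + |cbIm b - a.im| / 2) * |a.re|) *
        rexp (-(π * (cbIm b - a.im)) * |x.re|) := by
  obtain ⟨K, hK⟩ := exists_abs_add_log_norm_Dshift_le hb hb1 hη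
  refine ⟨K, fun a x h => ?_⟩
  rw [← Real.exp_add, ← Real.log_le_iff_le_exp (norm_pos_iff.mpr Dshift_ne_zero)]
  linarith [(abs_le.mp (hK a x h)).2]

theorem exists_norm_inv_Dshift_le (hb : 0 < b) (hb1 : b ≤ 1) {η : ℝ} (hη : 0 < η) :
    ∃ K, ∀ a x : ℂ, |x.im| + |cbIm b - a.im| / 2 ≤ cbIm b - η →
      ‖(Dshift b a x)⁻¹‖ ≤ rexp (K + π * (|x.im| + |cbIm b - a.im| / 2) * |a.re|) *
        rexp (π * (cbIm b - a.im) * |x.re|) := by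
  obtain ⟨K, hK⟩ := exists_abs_add_log_norm_Dshift_le hb hb1 hη
  refine ⟨K, fun a x h => ?_⟩
  rw [← Real.exp_add, ← Real.log_le_iff_le_exp (norm_pos_iff.mpr (inv_ne_zero Dshift_ne_zero)),
    norm_inv, Real.log_inv]
  linarith [(abs_le.mp (hK a x h)).1]

theorem Dshift_add_mul_I_add_half_mul_I (hb : 0 < b) (hb1 : b ≤ 1)
    (h : |(x + (a - cb b) / 2 + b / 2 * I).im| < b⁻¹ / 2) :
    Dshift b (a + b * I) (x + b / 2 * I) =
      2 * Complex.cosh (π * b * (x + (a - cb b) / 2 + b / 2 * I)) * Dshift b a x := by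
  have hshift := wb_add_half_mul_I hb hb1 h
  rw [add_sub_cancel_right] at hshift
  have hnum : x + b / 2 * I + (a + b * I - cb b) / 2 =
      x + (a - cb b) / 2 + b / 2 * I + b / 2 * I := by ring
  have hden : x + b / 2 * I - (a + b * I - cb b) / 2 = x - (a - cb b) / 2 := by ring
  rw [Dshift, Dfun, hnum, hden, hshift, mul_div_assoc, Dshift, Dfun]

theorem cosh_mul_Dshift_add_half_mul_I (hb : 0 < b) (hb1 : b ≤ 1)
    (h : |x.im| + |cbIm b - a.im| / 2 < b⁻¹ / 2) :
    Complex.cosh (π * b * (x - (a - cb b) / 2)) * Dshift b a (x + b / 2 * I) =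
      Complex.cosh (π * b * (x + (a - cb b) / 2)) * Dshift b a (x - b / 2 * I) := by
  have hadd := wb_add_half_mul_I hb hb1 (abs_im_add_half_sub_cb_le.trans_lt h)
  have hsub := wb_add_half_mul_I hb hb1 (abs_im_sub_half_sub_cb_le.trans_lt h)
  have hcosh := cosh_pi_mul_ne_zero hb (abs_im_sub_half_sub_cb_le.trans_lt h)
  simp only [Dshift, Dfun]
  rw [add_right_comm x, add_sub_right_comm x (b / 2 * I), sub_right_comm x,
    sub_add_eq_add_sub x (b / 2 * I), hadd, hsub,
    mul_div_mul_comm, mul_div_mul_left _ _ two_ne_zero, ← mul_assoc, mul_div_cancel₀ _ hcosh]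

end Dshift

/-! ### The Fourier transform of `D` -/

/-- The Fourier transform of `x ↦ Dshift b a x` at frequency `-t`, continued to complex `t`. -/
def fourierD (b : ℝ) (a t : ℂ) : ℂ := ∫ x : ℝ, cexp (2 * π * I * t * x) * Dshift b a x

/-- The argument of the hyperbolic functions in the difference equations of `fourierD`. -/
def shiftAngle (b : ℝ) (a : ℂ) : ℂ := π * b * ((a - cb b) / 2 + b / 2 * I)

section FourierD

variable {b : ℝ} {a t : ℂ}

theorem abs_re_two_pi_I_mul (t : ℂ) : |(2 * π * I * t).re| = 2 * π * |t.im| := by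
  have hre : (2 * π * I * t).re = -(2 * π * t.im) := by simp
  rw [hre, abs_neg, abs_mul, abs_of_pos two_pi_pos]

theorem norm_exp_two_pi_I_mul_ofReal (t x : ℝ) : ‖cexp (2 * π * I * t * x)‖ = 1 := by
  rw [Complex.norm_exp, Real.exp_eq_one_iff]
  simp

theorem abs_cbIm_sub_div_two_lt (ha : |a.im| < cbIm b) : |cbIm b - a.im| / 2 < cbIm b := by
  have := abs_lt.mp ha
  rw [abs_of_pos (by linarith)]
  linarith

theorem continuous_Dshift_ofReal (hb : 0 < b) (hb1 : b ≤ 1) (ha : |a.im| < cbIm b) :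
    Continuous fun x : ℝ => Dshift b a x :=
  continuous_iff_continuousAt.mpr fun x =>
    (differentiableAt_Dshift hb hb1 (by
      simpa using abs_cbIm_sub_div_two_lt ha)).continuousAt.comp
      continuous_ofReal.continuousAt

theorem exists_norm_Dshift_ofReal_le (hb : 0 < b) (hb1 : b ≤ 1) {η : ℝ} (hη : 0 < η) :
    ∃ K, ∀ a : ℂ, |a.im| ≤ cbIm b - η → ∀ x : ℝ,
      ‖Dshift b a x‖ ≤ rexp (K + π * ((cbIm b - a.im) / 2) * |a.re|) *
        rexp (-(π * (cbIm b - a.im)) * |x|) := by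
  obtain ⟨K, hK⟩ := exists_norm_Dshift_le hb hb1 (half_pos hη)
  refine ⟨K, fun a ha x => ?_⟩
  have ha' := abs_le.mp ha
  have hpos : |cbIm b - a.im| = cbIm b - a.im := abs_of_nonneg (by linarith)
  simpa [hpos] using hK a x (by
    rw [ofReal_im, abs_zero, zero_add, hpos]
    linarith)

theorem exists_norm_Dshift_ofReal_le_mul_exp (hb : 0 < b) (hb1 : b ≤ 1) (ha : |a.im| < cbIm b) :
    ∃ A, ∀ x : ℝ, ‖Dshift b a x‖ ≤ A * rexp (-(π * (cbIm b - a.im)) * |x|) := by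
  obtain ⟨K, hK⟩ := exists_norm_Dshift_ofReal_le hb hb1 (sub_pos.mpr ha)
  exact ⟨_, hK a (sub_sub_cancel _ _).ge⟩

theorem integrable_exp_mul_Dshift (hb : 0 < b) (hb1 : b ≤ 1) (ha : |a.im| < cbIm b)
    (ht : |t.im| < (cbIm b - a.im) / 2) :
    Integrable fun x : ℝ => cexp (2 * π * I * t * x) * Dshift b a x := by
  obtain ⟨A, hA⟩ := exists_norm_Dshift_ofReal_le_mul_exp hb hb1 ha
  refine integrable_exp_mul_ofReal_mul (continuous_Dshift_ofReal hb hb1 ha) hA ?_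
  rw [abs_re_two_pi_I_mul]
  nlinarith [pi_pos]

theorem differentiableAt_fourierD (hb : 0 < b) (hb1 : b ≤ 1) (ha : |a.im| < cbIm b)
    (ht : |t.im| < (cbIm b - a.im) / 2) : DifferentiableAt ℂ (fourierD b a) t := by
  obtain ⟨A, hA⟩ := exists_norm_Dshift_ofReal_le_mul_exp hb hb1 ha
  have h := hasDerivAt_integral_exp_mul_ofReal_mul (continuous_Dshift_ofReal hb hb1 ha) hA
    (w := 2 * π * I * t) (by
      rw [abs_re_two_pi_I_mul]
      nlinarith [pi_pos])
  exact h.differentiableAt.comp (f := (2 * π * I * ·)) t (by fun_prop)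

theorem exists_norm_fourierD_le (hb : 0 < b) (hb1 : b ≤ 1) (ha : |a.im| < cbIm b) {h : ℝ}
    (hh : h < (cbIm b - a.im) / 2) : ∃ C, ∀ t : ℂ, |t.im| ≤ h → ‖fourierD b a t‖ ≤ C := by
  obtain ⟨A, hA⟩ := exists_norm_Dshift_ofReal_le_mul_exp hb hb1 ha
  refine ⟨_, fun t ht => norm_integral_exp_mul_ofReal_mul_le hA (ρ := 2 * π * h) ?_ ?_⟩
  · rw [abs_re_two_pi_I_mul]
    gcongr
  · nlinarith [pi_pos]

theorem differentiableAt_fourierD_param (hb : 0 < b) (hb1 : b ≤ 1) (ha : |a.im| < cbIm b)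
    (t : ℝ) : DifferentiableAt ℂ (fourierD b · t) a := by
  obtain ⟨ρ, haρ, hρ⟩ := exists_between ha
  obtain ⟨K, hK⟩ := exists_norm_Dshift_ofReal_le hb hb1 (sub_pos.mpr hρ)
  have hnhds : {z : ℂ | |z.im| < ρ ∧ |z.re| < |a.re| + 1} ∈ 𝓝 a :=
    ((isOpen_lt continuous_im.abs continuous_const).inter
      (isOpen_lt continuous_re.abs continuous_const)).mem_nhds ⟨haρ, lt_add_one |a.re|⟩
  refine (hasDerivAt_integral_of_dominated_holomorphic hnhds
    (((integrable_exp_neg_mul_abs (κ := π * (cbIm b - ρ))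
      (mul_pos pi_pos (sub_pos.mpr hρ))).const_mul
      (rexp (K + π * cbIm b * (|a.re| + 1))))) ?_ ?_ ?_).differentiableAt
  · exact fun z hz => Continuous.aestronglyMeasurable
      (.mul (by fun_prop) (continuous_Dshift_ofReal hb hb1 (hz.1.trans hρ)))
  · exact fun x z hz => (differentiableAt_Dshift_param hb hb1 (by
      simpa using abs_cbIm_sub_div_two_lt (hz.1.trans hρ))).const_mul _
  · intro z hz x
    have him := abs_lt.mp hz.1
    rw [norm_mul, norm_exp_two_pi_I_mul_ofReal, one_mul]
    refine (hK z (by rw [sub_sub_cancel]; exact hz.1.le) x).trans ?_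
    gcongr
    · exact mul_nonneg pi_pos.le (cbIm_pos hb).le
    · linarith
    · exact hz.2.le
    · linarith

theorem fourierD_neg (hb : 0 < b) (hb1 : b ≤ 1) (ha : |a.im| < cbIm b) :
    fourierD b a (-t) = fourierD b a t := by
  rw [fourierD, fourierD, ← integral_neg_eq_self]
  refine integral_congr_ae (Eventually.of_forall fun x => ?_)
  have heven := Dshift_neg hb hb1 (a := a) (x := x) (by simpa using abs_cbIm_sub_div_two_lt ha)
  simp only [ofReal_neg, heven, mul_neg, neg_mul, neg_neg]

theorem norm_exp_two_pi_I_mul_mul_le (t z : ℂ) :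
    ‖cexp (2 * π * I * t * z)‖ ≤
      rexp (2 * π * (|t.re| * |z.im|)) * rexp (2 * π * |t.im| * |z.re|) := by
  rw [Complex.norm_exp, ← Real.exp_add, Real.exp_le_exp]
  have hre : (2 * π * I * t * z).re = 2 * π * (-(t.re * z.im) - t.im * z.re) := by
    simp
    ring
  have h₁ : -(t.re * z.im) ≤ |t.re| * |z.im| := abs_mul t.re _ ▸ neg_le_abs _
  have h₂ : -(t.im * z.re) ≤ |t.im| * |z.re| := abs_mul t.im _ ▸ neg_le_abs _
  rw [hre]
  nlinarith [pi_pos]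

theorem fourierD_eq_integral_add_half_mul_I (hb : 0 < b) (hb1 : b ≤ 1)
    (ha : |(a - b / 2 * I).im| < cbIm b - b / 2) (ht : |t.im| < (cbIm b - a.im) / 2) :
    fourierD b a t = ∫ x : ℝ,
      cexp (2 * π * I * t * (x + b / 2 * I)) * Dshift b a (x + b / 2 * I) := by
  have ha_im : (a - b / 2 * I).im = a.im - b / 2 := by simp
  rw [ha_im, abs_lt] at ha
  have hpos : |cbIm b - a.im| = cbIm b - a.im := abs_of_pos (by linarith)
  obtain ⟨K, hK⟩ := exists_norm_Dshift_le hb hb1 (η := (cbIm b - b + a.im) / 2) (by linarith)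
  have him {z : ℂ} (hz : z.im ∈ Set.uIcc 0 (b / 2)) : |z.im| ≤ b / 2 := by
    rw [Set.uIcc_of_le (by positivity)] at hz
    rw [abs_of_nonneg hz.1]
    exact hz.2
  have hshift := integral_horizontal_line_eq
    (h := fun z => cexp (2 * π * I * t * z) * Dshift b a z) (y₀ := 0) (y₁ := b / 2)
    (κ := π * (cbIm b - a.im) - 2 * π * |t.im|)
    (C := rexp (2 * π * (|t.re| * (b / 2))) * rexp (K + π * cbIm b * |a.re|))
    (by nlinarith [pi_pos]) (fun z hz => ?_) (fun z hz => ?_)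
  · simpa [fourierD] using hshift
  · have := differentiableAt_Dshift hb hb1 (a := a) (x := z) (by linarith [him hz])
    fun_prop
  · have hM : |z.im| + |cbIm b - a.im| / 2 ≤ cbIm b := by linarith [him hz]
    calc ‖cexp (2 * π * I * t * z) * Dshift b a z‖
        ≤ rexp (2 * π * (|t.re| * |z.im|)) * rexp (2 * π * |t.im| * |z.re|) *
          (rexp (K + π * (|z.im| + |cbIm b - a.im| / 2) * |a.re|) *
            rexp (-(π * (cbIm b - a.im)) * |z.re|)) := by
          rw [norm_mul]
          gcongr
          · exact norm_exp_two_pi_I_mul_mul_le t z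
          · exact hK a z (by linarith [him hz])
      _ ≤ rexp (2 * π * (|t.re| * (b / 2))) * rexp (2 * π * |t.im| * |z.re|) *
          (rexp (K + π * cbIm b * |a.re|) * rexp (-(π * (cbIm b - a.im)) * |z.re|)) := by
          gcongr
          exact him hz
      _ = _ := by
          rw [mul_mul_mul_comm, ← Real.exp_add (2 * π * |t.im| * |z.re|)]
          ring_nf

theorem exp_mul_Dshift_add_mul_I (hb : 0 < b) (hb1 : b ≤ 1) (ha : |a.im| < cbIm b)
    (hab : a.im + b < cbIm b) (t : ℂ) (x : ℝ) :
    cexp (2 * π * I * t * (x + b / 2 * I)) * Dshift b (a + b * I) (x + b / 2 * I) =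
      cexp (-(π * b * t)) *
        (cexp (shiftAngle b a) * (cexp (2 * π * I * (t - b / 2 * I) * x) * Dshift b a x) +
          cexp (-shiftAngle b a) * (cexp (2 * π * I * (t + b / 2 * I) * x) * Dshift b a x)) := by
  have him : ((x : ℂ) + (a - cb b) / 2 + b / 2 * I).im = -((cbIm b - a.im) / 2 - b / 2) := by
    rw [add_im, im_add_half_sub_cb]
    simp
    ring
  have hD := Dshift_add_mul_I_add_half_mul_I hb hb1 (a := a) (x := x) (by
    rw [him, abs_neg, abs_of_pos (by linarith)]
    linarith [show cbIm b = (b + b⁻¹) / 2 from rfl, neg_lt_of_abs_lt ha])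
  simp only [hD, Complex.two_cosh, shiftAngle]
  simp only [← mul_assoc, ← Complex.exp_add, mul_add, add_mul]
  congr 3
  · linear_combination π * b * (t + x) * I_sq
  · linear_combination π * b * (t - x) * I_sq

theorem fourierD_add_mul_I (hb : 0 < b) (hb1 : b ≤ 1) (ha : |a.im| < cbIm b)
    (ht : |t.im| < (cbIm b - a.im - b) / 2) :
    fourierD b (a + b * I) t = cexp (-(π * b * t)) *
      (cexp (shiftAngle b a) * fourierD b a (t - b / 2 * I) +
        cexp (-shiftAngle b a) * fourierD b a (t + b / 2 * I)) := by
  have ha' := abs_lt.mp ha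
  have hab : a.im + b < cbIm b := by linarith [abs_nonneg t.im]
  have hsub := integrable_exp_mul_Dshift hb hb1 ha (t := t - b / 2 * I)
    (by simpa using (abs_sub t.im (b / 2)).trans_lt (by
      linarith [abs_of_pos (half_pos hb)]))
  have hadd := integrable_exp_mul_Dshift hb hb1 ha (t := t + b / 2 * I)
    (by simpa using (abs_add_le t.im (b / 2)).trans_lt (by
      linarith [abs_of_pos (half_pos hb)]))
  rw [fourierD_eq_integral_add_half_mul_I hb hb1
    (by simp [abs_lt]; constructor <;> linarith) (by simp; linarith)]
  simp_rw [exp_mul_Dshift_add_mul_I hb hb1 ha hab]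
  rw [integral_const_mul, integral_add (hsub.const_mul _) (hadd.const_mul _), integral_const_mul,
    integral_const_mul, fourierD, fourierD]

theorem pi_mul_half_neg_sub_cb (hb : 0 < b) :
    π * b * ((-a - cb b) / 2) = -(shiftAngle b a + π / 2 * I) := by
  have : (b : ℂ) ≠ 0 := ofReal_ne_zero.mpr hb.ne'
  rw [shiftAngle, cb]
  field_simp
  ring

theorem cosh_mul_fourierD (hb : 0 < b) (hb1 : b ≤ 1) (ha : |a.im| < cbIm b)
    (ht : |t.im| < (cbIm b - a.im - b) / 2) :
    Complex.cosh (π * b * (t - (-a - cb b) / 2)) * fourierD b a (t + b / 2 * I) =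
      Complex.cosh (π * b * (t + (-a - cb b) / 2)) * fourierD b a (t - b / 2 * I) := by
  have hrel := fourierD_add_mul_I hb hb1 ha ht
  have hrel_neg := fourierD_add_mul_I hb hb1 ha (t := -t) (by rwa [neg_im, abs_neg])
  have hab : |(a + b * I).im| < cbIm b := by
    have := neg_lt_of_abs_lt ha
    have := abs_nonneg t.im
    simp [abs_lt]
    constructor <;> linarith
  rw [fourierD_neg hb hb1 hab, ← neg_add', neg_add_eq_sub, ← neg_sub t, fourierD_neg hb hb1 ha,
    fourierD_neg hb hb1 ha, hrel] at hrel_neg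
  have hcosh_half (z : ℂ) : Complex.cosh (z + π / 2 * I) = I * Complex.sinh z := by
    rw [Complex.cosh_add, Complex.cosh_mul_I, Complex.sinh_mul_I, Complex.cos_pi_div_two,
      Complex.sin_pi_div_two]
    ring
  have hcosh_sub : Complex.cosh (π * b * (t - (-a - cb b) / 2)) =
      I * Complex.sinh (π * b * t + shiftAngle b a) := by
    rw [mul_sub, pi_mul_half_neg_sub_cb hb, sub_neg_eq_add, ← add_assoc, hcosh_half]
  have hcosh_add : Complex.cosh (π * b * (t + (-a - cb b) / 2)) =
      I * Complex.sinh (-(π * b * t) + shiftAngle b a) := by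
    rw [mul_add, pi_mul_half_neg_sub_cb hb, ← Complex.cosh_neg, neg_add, neg_neg, ← add_assoc,
      hcosh_half]
  rw [hcosh_sub, hcosh_add, Complex.sinh, Complex.sinh]
  simp only [neg_add, neg_neg, Complex.exp_add, mul_neg] at hrel_neg ⊢
  linear_combination -(I / 2) * hrel_neg

theorem fourierD_div_Dshift_periodic (hb : 0 < b) (hb1 : b ≤ 1) (ha : |a.im| < cbIm b)
    (ht : |t.im| < (cbIm b - a.im - b) / 2) :
    fourierD b a (t + b / 2 * I) / Dshift b (-a) (t + b / 2 * I) =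
      fourierD b a (t - b / 2 * I) / Dshift b (-a) (t - b / 2 * I) := by
  have hdom : |t.im| + |cbIm b - (-a).im| / 2 < b⁻¹ / 2 := by
    have := abs_lt.mp ha
    rw [neg_im, abs_of_pos (a := cbIm b - -a.im) (by linarith)]
    linarith [show cbIm b = (b + b⁻¹) / 2 from rfl]
  have hD := cosh_mul_Dshift_add_half_mul_I hb hb1 hdom
  have hΦ := cosh_mul_fourierD hb hb1 ha ht
  have hcosh := cosh_pi_mul_ne_zero hb (abs_im_sub_half_sub_cb_le.trans_lt hdom)
  rw [div_eq_div_iff Dshift_ne_zero Dshift_ne_zero]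
  refine mul_left_cancel₀ hcosh ?_
  linear_combination Dshift b (-a) (t - b / 2 * I) * hΦ - fourierD b a (t - b / 2 * I) * hD

end FourierD

section FourierConst

variable {b : ℝ} {a t : ℂ}

theorem fourierD_eq_div_mul_Dshift_neg (hb : 0 < b) (hb1 : b ≤ 1) (ha : |a.im| < cbIm b)
    (hab : a.im + b < cbIm b) (ht : |t.im| < (cbIm b - a.im) / 2) :
    fourierD b a t = fourierD b a 0 / Dshift b (-a) 0 * Dshift b (-a) t := by
  have ha' := abs_lt.mp ha
  have hpos : |cbIm b - (-a).im| = cbIm b + a.im := by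
    rw [neg_im, sub_neg_eq_add, abs_of_pos (by linarith)]
  obtain ⟨C, hC⟩ := exists_norm_fourierD_le hb hb1 ha (h := b / 2) (by linarith)
  obtain ⟨K, hK⟩ := exists_norm_inv_Dshift_le hb hb1 (η := (cbIm b - a.im - b) / 2) (by linarith)
  have hκ : π * (cbIm b + a.im) * b < 2 * π := by
    have hlt : cbIm b + a.im < 2 * b⁻¹ := by
      linarith [show cbIm b = (b + b⁻¹) / 2 from rfl, inv_pos.mpr hb]
    have hmul := mul_lt_mul_of_pos_right hlt hb
    rw [mul_assoc, inv_mul_cancel₀ hb.ne', mul_one] at hmul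
    nlinarith [pi_pos]
  have hconst := eq_of_periodic_of_norm_le_exp (f := fun t => fourierD b a t / Dshift b (-a) t)
    (C := C * rexp (K + π * cbIm b * |a.re|)) hb (H := (cbIm b - a.im) / 2) (by linarith) hκ
    (fun z hz => (differentiableAt_fourierD hb hb1 ha hz).div
      (differentiableAt_Dshift hb hb1 (by rw [hpos]; linarith)) Dshift_ne_zero)
    (fun z hz => fourierD_div_Dshift_periodic hb hb1 ha (by linarith)) (fun z hz => ?_) ht
  · rw [← hconst, div_mul_cancel₀ _ Dshift_ne_zero]
  · have hinv := hK (-a) z (by rw [hpos]; linarith)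
    rw [hpos, neg_re, abs_neg, neg_im, sub_neg_eq_add] at hinv
    have hC₀ := (norm_nonneg _).trans (hC z hz)
    rw [div_eq_mul_inv, norm_mul, mul_assoc]
    refine mul_le_mul (hC z hz) (hinv.trans ?_) (norm_nonneg _) hC₀
    gcongr
    linarith

theorem two_cosh_shiftAngle_mul_two_cosh (hb : 0 < b) (a : ℂ) :
    2 * Complex.cosh (shiftAngle b a) * (2 * Complex.cosh (π * b * ((-a - cb b) / 2))) =
      2 * Complex.cosh (π * b * (a + b / 2 * I)) := by
  have hb₀ : (b : ℂ) ≠ 0 := ofReal_ne_zero.mpr hb.ne'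
  have hdouble : π * b * (a + b / 2 * I) = 2 * shiftAngle b a + π / 2 * I := by
    rw [shiftAngle, cb]
    field_simp
    ring
  rw [pi_mul_half_neg_sub_cb hb, hdouble, Complex.cosh_neg, Complex.cosh_add, Complex.cosh_add,
    Complex.cosh_mul_I, Complex.sinh_mul_I, Complex.cos_pi_div_two, Complex.sin_pi_div_two,
    Complex.sinh_two_mul]
  ring

/-- The ratio `∫ D_a / (D_{-a}(0) w_b(a))`, which turns out not to depend on `a`. -/
def fourierRatio (b : ℝ) (a : ℂ) : ℂ := fourierD b a 0 / (Dshift b (-a) 0 * wb b a)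

/-- The universal constant in the Fourier transform of `Dshift`, a square root of `w_b(0)⁻²`. -/
def fourierConst (b : ℝ) : ℂ := fourierRatio b 0

theorem Dshift_neg_half_mul_I (hb : 0 < b) (hb1 : b ≤ 1) (ha : -cbIm b < a.im)
    (hab : a.im + b < cbIm b) : Dshift b (-a) (b / 2 * I) =
      2 * Complex.cosh (π * b * ((-a - cb b) / 2)) * Dshift b (-(a + b * I)) 0 := by
  have him : ((-a - cb b) / 2).im = -((cbIm b + a.im) / 2) := by
    simp [cb_eq]
    ring
  have hw := wb_add_half_mul_I hb hb1 (z := (-a - cb b) / 2) (by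
    rw [him, abs_neg, abs_of_pos (by linarith)]
    linarith [show cbIm b = (b + b⁻¹) / 2 from rfl])
  have hparam : (-(a + b * I) - cb b) / 2 = (-a - cb b) / 2 - b / 2 * I := by ring
  rw [Dshift, Dshift, Dfun, Dfun, hparam, add_comm, hw, zero_add, zero_sub, neg_sub,
    mul_div_assoc]

theorem fourierRatio_add_mul_I (hb : 0 < b) (hb1 : b ≤ 1) (ha : |a.im| < cbIm b)
    (hab : a.im + b < cbIm b) : fourierRatio b (a + b * I) = fourierRatio b a := by
  have ha' := abs_lt.mp ha
  have him : (b / 2 * I : ℂ).im = b / 2 := by simp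
  have hΦ : fourierD b (a + b * I) 0 =
      2 * Complex.cosh (shiftAngle b a) * fourierD b a (b / 2 * I) := by
    have hrel := fourierD_add_mul_I hb hb1 ha (t := 0) (by simpa using by linarith)
    rw [zero_sub, fourierD_neg hb hb1 ha, zero_add, mul_zero, neg_zero, Complex.exp_zero] at hrel
    rw [hrel, Complex.two_cosh]
    ring
  have hΦ_half := fourierD_eq_div_mul_Dshift_neg hb hb1 ha hab (t := b / 2 * I)
    (by rw [him, abs_of_pos (half_pos hb)]; linarith)
  have hw := wb_add_half_mul_I hb hb1 (z := a + b / 2 * I) (by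
    rw [add_im, him, abs_lt]
    constructor <;> linarith [show cbIm b = (b + b⁻¹) / 2 from rfl])
  rw [add_sub_cancel_right, add_assoc, ← add_mul, add_halves,
    ← two_cosh_shiftAngle_mul_two_cosh hb] at hw
  have hcosh := left_ne_zero_of_mul (hw ▸ wb_ne_zero (b := b) (a + b * I))
  have hD := Dshift_ne_zero (b := b) (a := -(a + b * I)) (x := 0)
  rw [fourierRatio, fourierRatio, hΦ, hΦ_half, Dshift_neg_half_mul_I hb hb1 ha'.1 hab, hw]
  generalize Complex.cosh (π * b * ((-a - cb b) / 2)) = c at *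
  have hc₁ := right_ne_zero_of_mul (left_ne_zero_of_mul hcosh)
  have hc₂ := right_ne_zero_of_mul (right_ne_zero_of_mul hcosh)
  field_simp

theorem differentiableAt_Dshift_neg_param (hb : 0 < b) (hb1 : b ≤ 1) (ha : |a.im| < cbIm b)
    (t : ℝ) : DifferentiableAt ℂ (fun a => Dshift b (-a) t) a := by
  refine (differentiableAt_Dshift_param hb hb1 (a := -a) (x := t) ?_).comp (f := Neg.neg) a
    differentiable_neg.differentiableAt
  simpa using abs_cbIm_sub_div_two_lt (a := -a) (by rwa [neg_im, abs_neg])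

theorem differentiableAt_fourierRatio (hb : 0 < b) (hb1 : b ≤ 1) (ha : |a.im| < cbIm b) :
    DifferentiableAt ℂ (fourierRatio b) a := by
  have hΦ := differentiableAt_fourierD_param hb hb1 ha 0
  have hD := differentiableAt_Dshift_neg_param hb hb1 ha 0
  rw [ofReal_zero] at hΦ hD
  exact hΦ.div (hD.mul (differentiableAt_wb hb hb1 ha)) (mul_ne_zero Dshift_ne_zero (wb_ne_zero _))

theorem exists_norm_fourierD_zero_le (hb : 0 < b) (hb1 : b ≤ 1) {h : ℝ} (hh : h < cbIm b) :
    ∃ C, ∀ a : ℂ, |a.im| ≤ h →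
      ‖fourierD b a 0‖ ≤ C * rexp (π * ((cbIm b - a.im) / 2) * |a.re|) := by
  obtain ⟨K, hK⟩ := exists_norm_Dshift_ofReal_le hb hb1 (sub_pos.mpr hh)
  have hint := integrable_exp_neg_mul_abs (mul_pos pi_pos (sub_pos.mpr hh))
  refine ⟨rexp K * ∫ x : ℝ, rexp (-(π * (cbIm b - h)) * |x|), fun a ha => ?_⟩
  rw [mul_right_comm, ← Real.exp_add, ← integral_const_mul]
  refine norm_integral_le_of_norm_le (hint.const_mul _) (Eventually.of_forall fun x => ?_)
  rw [mul_zero, zero_mul, Complex.exp_zero, one_mul]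
  refine (hK a (by rwa [sub_sub_cancel]) x).trans ?_
  gcongr
  exact (abs_le.mp ha).2

theorem exists_norm_inv_wb_le (hb : 0 < b) (hb1 : b ≤ 1) {h : ℝ} (hh : h < cbIm b) :
    ∃ K, ∀ z : ℂ, |z.im| ≤ h → ‖(wb b z)⁻¹‖ ≤ rexp (K - π * z.im * |z.re|) := by
  obtain ⟨K, hK⟩ := exists_abs_log_norm_wb_sub_le hb hb1 (sub_pos.mpr hh)
  refine ⟨K, fun z hz => ?_⟩
  have := neg_le_of_abs_le (hK z (by rwa [sub_sub_cancel]))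
  rw [← Real.log_le_iff_le_exp (norm_pos_iff.mpr (inv_ne_zero (wb_ne_zero z))), norm_inv,
    Real.log_inv]
  linarith

theorem exists_norm_fourierRatio_le (hb : 0 < b) (hb1 : b ≤ 1) {h : ℝ} (hh : h < cbIm b) :
    ∃ C, ∀ a : ℂ, |a.im| ≤ h → ‖fourierRatio b a‖ ≤ C * rexp (π * (cbIm b + h) * |a.re|) := by
  obtain ⟨C, hC⟩ := exists_norm_fourierD_zero_le hb hb1 hh
  obtain ⟨K, hK⟩ := exists_norm_inv_Dshift_le hb hb1 (half_pos (sub_pos.mpr hh))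
  obtain ⟨L, hL⟩ := exists_norm_inv_wb_le hb hb1 hh
  refine ⟨C * (rexp K * rexp L), fun a ha => ?_⟩
  have him := abs_le.mp ha
  have hpos : |cbIm b - (-a).im| = cbIm b + a.im := by
    rw [neg_im, sub_neg_eq_add, abs_of_pos (by linarith)]
  have hD := hK (-a) 0 (by rw [hpos, zero_im, abs_zero]; linarith)
  rw [hpos, zero_im, abs_zero, zero_re, abs_zero, mul_zero, Real.exp_zero, mul_one, zero_add,
    neg_re, abs_neg] at hD
  have hC₀ : 0 ≤ C := nonneg_of_mul_nonneg_left ((norm_nonneg _).trans (hC a ha)) (Real.exp_pos _)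
  rw [fourierRatio, div_eq_mul_inv, mul_inv, norm_mul, norm_mul]
  calc ‖fourierD b a 0‖ * (‖(Dshift b (-a) 0)⁻¹‖ * ‖(wb b a)⁻¹‖)
      ≤ C * rexp (π * ((cbIm b - a.im) / 2) * |a.re|) *
          (rexp (K + π * ((cbIm b + a.im) / 2) * |a.re|) * rexp (L - π * a.im * |a.re|)) := by
        gcongr
        exacts [hC a ha, hL a ha]
    _ = C * (rexp K * rexp L) * rexp (π * (cbIm b - a.im) * |a.re|) := by
        rw [mul_assoc C, mul_assoc C, ← Real.exp_add, ← Real.exp_add, ← Real.exp_add,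
          ← Real.exp_add]
        ring_nf
    _ ≤ _ := by
        gcongr
        linarith

theorem fourierRatio_eq_fourierConst (hb : 0 < b) (hb1 : b ≤ 1) (ha : |a.im| < cbIm b) :
    fourierRatio b a = fourierConst b := by
  have hhalf : b / 2 < cbIm b := by
    linarith [show cbIm b = (b + b⁻¹) / 2 from rfl, inv_pos.mpr hb]
  have hκ : π * (cbIm b + b / 2) * b < 2 * π := by
    have hmul : (cbIm b + b / 2) * b = b ^ 2 + 1 / 2 := by
      rw [cbIm]
      field_simp
      ring
    nlinarith [pi_pos, pow_le_one₀ hb.le hb1 (n := 2)]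
  obtain ⟨C, hC⟩ := exists_norm_fourierRatio_le hb hb1 hhalf
  refine eq_of_periodic_of_norm_le_exp hb hhalf hκ
    (fun z hz => differentiableAt_fourierRatio hb hb1 hz) (fun z hz => ?_) hC ha
  have him : (z - b / 2 * I).im = z.im - b / 2 := by simp
  have hz' := abs_lt.mp hz
  rw [← fourierRatio_add_mul_I hb hb1 (a := z - b / 2 * I)]
  · ring_nf
  · rw [him, abs_lt]
    constructor <;> linarith
  · linarith

theorem fourierD_eq (hb : 0 < b) (hb1 : b ≤ 1) (ha : |a.im| < cbIm b) (t : ℝ) :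
    fourierD b a t = fourierConst b * wb b a * Dshift b (-a) t := by
  have hhalf : b / 2 < cbIm b := by
    linarith [show cbIm b = (b + b⁻¹) / 2 from rfl, inv_pos.mpr hb]
  have hlow (z : ℂ) (hz : z.im ∈ Set.Ioo (-cbIm b) (cbIm b - b)) :
      fourierD b z t = fourierConst b * wb b z * Dshift b (-z) t := by
    have hz_abs : |z.im| < cbIm b := abs_lt.mpr ⟨hz.1, by linarith [hz.2]⟩
    rw [fourierD_eq_div_mul_Dshift_neg hb hb1 hz_abs (by linarith [hz.2])
      (by simpa using by linarith [hz.2]), ← fourierRatio_eq_fourierConst hb hb1 hz_abs,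
      fourierRatio, ← div_div, div_mul_cancel₀ _ (wb_ne_zero z)]
  refine eqOn_strip_of_frequently_eq (H := cbIm b) (z₀ := -(b / 2 : ℝ) * I)
    (fun z hz => differentiableAt_fourierD_param hb hb1 hz t)
    (fun z hz => ((differentiableAt_wb hb hb1 hz).const_mul _).mul
      (differentiableAt_Dshift_neg_param hb hb1 hz t)) ?_ ?_ ha
  · simpa [abs_of_pos (half_pos hb)] using hhalf
  · refine (eventually_of_mem (mem_nhdsWithin_of_mem_nhds
      ((isOpen_Ioo.preimage continuous_im).mem_nhds ?_)) hlow).frequently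
    simpa using ⟨hhalf, by linarith⟩

theorem fourierConst_sq_mul (hb : 0 < b) (hb1 : b ≤ 1) :
    fourierConst b ^ 2 * wb b 0 ^ 2 = 1 := by
  have h0 : |(0 : ℂ).im| < cbIm b := by simpa using cbIm_pos hb
  have hcont := continuous_Dshift_ofReal hb hb1 h0
  have hint : Integrable fun x : ℝ => Dshift b 0 x := by
    simpa using integrable_exp_mul_Dshift hb hb1 (t := 0) h0 (by simpa using cbIm_pos hb)
  have hfourier : FourierTransform.fourier (fun x : ℝ => Dshift b 0 x) =
      fun w : ℝ => fourierConst b * wb b 0 * Dshift b 0 w := by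
    ext w
    have hΦ := fourierD_eq hb hb1 h0 w
    rw [neg_zero, ← fourierD_neg hb hb1 h0] at hΦ
    rw [← hΦ, Real.fourier_real_eq_integral_exp_smul, fourierD]
    congr 1 with x
    rw [smul_eq_mul]
    congr 2
    push_cast
    ring
  have hinv := congrFun (hcont.fourierInv_fourier_eq hint (hfourier ▸ hint.const_mul _)) 0
  have hzero : ∫ x : ℝ, Dshift b 0 x = fourierConst b * wb b 0 * Dshift b 0 0 := by
    simpa [fourierD] using fourierD_eq hb hb1 h0 0
  rw [hfourier, Real.fourierInv_eq'] at hinv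
  simp only [RCLike.inner_apply, ringHom_apply, zero_mul, mul_zero, ofReal_zero,
    Complex.exp_zero, smul_eq_mul, one_mul, integral_const_mul, hzero] at hinv
  have hD := Dshift_ne_zero (b := b) (a := 0) (x := 0)
  refine mul_right_cancel₀ hD ?_
  linear_combination hinv

end FourierConst

/-! ### The beta integral -/

/-- The integrand of `betaD`. -/
def betaIntegrand (b : ℝ) (S δ μ t u : ℂ) : ℂ :=
  cexp (2 * π * I * μ * u) * (Dshift b (S + δ) (t / 2 + u) * Dshift b (S - δ) (t / 2 - u))

/-- The Fourier transform in `μ` of a product of two functions `D`, a hyperbolic beta integral. It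
is symmetric in `δ` and `t`, and Parseval's formula exchanges `μ` and `t`. -/
def betaD (b : ℝ) (S δ μ t : ℂ) : ℂ := ∫ u : ℝ, betaIntegrand b S δ μ t u

section BetaD

variable {b : ℝ} {a : ℂ}

theorem abs_im_ofReal_lt_cbIm (hb : 0 < b) (x : ℝ) : |(x : ℂ).im| < cbIm b := by
  simpa using cbIm_pos hb

theorem Dshift_neg_ofReal (hb : 0 < b) (hb1 : b ≤ 1) (ha : |a.im| < cbIm b) (x : ℝ) :
    Dshift b a (-x) = Dshift b a x :=
  Dshift_neg hb hb1 (by simpa using abs_cbIm_sub_div_two_lt ha)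

theorem integrable_Dshift (hb : 0 < b) (hb1 : b ≤ 1) (ha : |a.im| < cbIm b) :
    Integrable fun x : ℝ => Dshift b a x := by
  simpa using integrable_exp_mul_Dshift hb hb1 (t := 0) ha (by
    simpa using sub_pos.mpr (lt_of_abs_lt ha))

theorem Dshift_eq_fourierD (hb : 0 < b) (hb1 : b ≤ 1) (ha : |a.im| < cbIm b) (x : ℝ) :
    Dshift b a x = fourierConst b * wb b a * fourierD b (-a) x := by
  rw [fourierD_eq hb hb1 (by rwa [neg_im, abs_neg]), neg_neg]
  linear_combination -Dshift b a x * fourierConst_sq_mul hb hb1 -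
    fourierConst b ^ 2 * Dshift b a x * wb_mul_wb_neg hb hb1 ha

theorem integral_Dshift_mul (hb : 0 < b) (hb1 : b ≤ 1) (ha : |a.im| < cbIm b) {g : ℝ → ℂ}
    (hg : Integrable g) :
    ∫ x : ℝ, Dshift b a x * g x = fourierConst b * wb b a *
      ∫ y : ℝ, Dshift b (-a) y * ∫ x : ℝ, cexp (2 * π * I * y * x) * g x := by
  have ha_neg : |(-a).im| < cbIm b := by rwa [neg_im, abs_neg]
  have hint : Integrable (fun z : ℝ × ℝ => cexp (2 * π * I * z.1 * z.2) *
      (g z.1 * Dshift b (-a) z.2)) (volume.prod volume) :=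
    (hg.mul_prod (integrable_Dshift hb hb1 ha_neg)).bdd_mul (c := 1)
      (Continuous.aestronglyMeasurable (by fun_prop))
      (Eventually.of_forall fun z => (norm_exp_two_pi_I_mul_ofReal z.1 z.2).le)
  calc ∫ x : ℝ, Dshift b a x * g x
      = fourierConst b * wb b a *
          ∫ x : ℝ, ∫ y : ℝ, cexp (2 * π * I * x * y) * (g x * Dshift b (-a) y) := by
        rw [← integral_const_mul]
        congr 1 with x
        rw [Dshift_eq_fourierD hb hb1 ha, fourierD, mul_assoc, ← integral_mul_const]
        congr 2 with y
        ring
    _ = _ := by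
        rw [integral_integral_swap hint]
        congr 2 with y
        rw [← integral_const_mul]
        congr 1 with x
        rw [mul_right_comm (2 * π * I)]
        ring

theorem exists_norm_Dshift_ofReal_add_le (hb : 0 < b) (hb1 : b ≤ 1) (a s : ℝ) :
    ∃ A, 0 ≤ A ∧ ∀ u : ℝ, ‖Dshift b a (s + u)‖ ≤ A * rexp (-(π * cbIm b) * |u|) := by
  obtain ⟨A, hA⟩ := exists_norm_Dshift_ofReal_le_mul_exp hb hb1 (abs_im_ofReal_lt_cbIm hb a)
  have hA₀ : 0 ≤ A := by simpa using (norm_nonneg _).trans (hA 0)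
  rw [ofReal_im, sub_zero] at hA
  refine ⟨A * rexp (π * cbIm b * |s|), by positivity, fun u => ?_⟩
  rw [← ofReal_add, mul_assoc, ← Real.exp_add]
  refine (hA (s + u)).trans ?_
  gcongr
  have hu : |u| ≤ |s + u| + |s| := by simpa using abs_sub (s + u) s
  nlinarith [mul_le_mul_of_nonneg_left hu (mul_pos pi_pos (cbIm_pos hb)).le]

theorem continuous_Dshift_add (hb : 0 < b) (hb1 : b ≤ 1) (a s : ℝ) :
    Continuous fun u : ℝ => Dshift b a (s + u) := by
  simpa [Function.comp_def] using
    (continuous_Dshift_ofReal hb hb1 (abs_im_ofReal_lt_cbIm hb a)).comp (continuous_const_add s)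

theorem continuous_betaD_kernel (hb : 0 < b) (hb1 : b ≤ 1) (S δ t : ℝ) : Continuous fun u : ℝ =>
    Dshift b (S + δ) (t / 2 + u) * Dshift b (S - δ) (t / 2 - u) := by
  have hadd := continuous_Dshift_add hb hb1 (S + δ) (t / 2)
  have hsub := (continuous_Dshift_add hb hb1 (S - δ) (t / 2)).comp continuous_neg
  simpa [Function.comp_def, ← sub_eq_add_neg] using hadd.fun_mul hsub

theorem exists_norm_betaD_kernel_le (hb : 0 < b) (hb1 : b ≤ 1) (S δ t : ℝ) : ∃ A, ∀ u : ℝ,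
    ‖Dshift b (S + δ) (t / 2 + u) * Dshift b (S - δ) (t / 2 - u)‖ ≤
      A * rexp (-(2 * π * cbIm b) * |u|) := by
  obtain ⟨A₁, hA₁, hadd⟩ := exists_norm_Dshift_ofReal_add_le hb hb1 (S + δ) (t / 2)
  obtain ⟨A₂, -, hsub⟩ := exists_norm_Dshift_ofReal_add_le hb hb1 (S - δ) (t / 2)
  refine ⟨A₁ * A₂, fun u => ?_⟩
  have hadd_u := hadd u
  have hsub_u := hsub (-u)
  push_cast [abs_neg, ← sub_eq_add_neg] at hadd_u hsub_u
  rw [norm_mul]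
  calc _ ≤ A₁ * rexp (-(π * cbIm b) * |u|) * (A₂ * rexp (-(π * cbIm b) * |u|)) := by gcongr
    _ = _ := by
      rw [mul_mul_mul_comm, ← Real.exp_add]
      ring_nf

theorem integrable_betaIntegrand (hb : 0 < b) (hb1 : b ≤ 1) (S δ t : ℝ) {μ : ℂ}
    (hμ : |μ.im| < cbIm b) : Integrable fun u : ℝ => betaIntegrand b S δ μ t u := by
  obtain ⟨A, hA⟩ := exists_norm_betaD_kernel_le hb hb1 S δ t
  refine integrable_exp_mul_ofReal_mul (continuous_betaD_kernel hb hb1 S δ t) hA ?_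
  rw [abs_re_two_pi_I_mul]
  gcongr

theorem differentiableAt_betaD (hb : 0 < b) (hb1 : b ≤ 1) (S δ t : ℝ) {μ : ℂ}
    (hμ : |μ.im| < cbIm b) : DifferentiableAt ℂ (betaD b S δ · t) μ := by
  obtain ⟨A, hA⟩ := exists_norm_betaD_kernel_le hb hb1 S δ t
  have h := hasDerivAt_integral_exp_mul_ofReal_mul (continuous_betaD_kernel hb hb1 S δ t) hA
    (w := 2 * π * I * μ) (by
      rw [abs_re_two_pi_I_mul]
      gcongr)
  exact h.differentiableAt.comp (f := (2 * π * I * ·)) μ (by fun_prop)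

theorem wb_sq_mul_Dshift (hb : 0 < b) (hb1 : b ≤ 1) (a x : ℝ) :
    wb b 0 ^ 2 * Dshift b a x = wb b (x + (a - cb b) / 2) * wb b ((a - cb b) / 2 - x) := by
  have hsub := wb_mul_wb_neg hb hb1 (z := x - (a - cb b) / 2) (abs_im_sub_half_sub_cb_le.trans_lt
    (by simpa using abs_cbIm_sub_div_two_lt (abs_im_ofReal_lt_cbIm hb a)))
  rw [neg_sub] at hsub
  rw [← hsub, Dshift, Dfun, mul_comm (wb b _), mul_assoc, mul_div_cancel₀ _ (wb_ne_zero _),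
    mul_comm]

theorem betaD_symm (hb : 0 < b) (hb1 : b ≤ 1) (S δ t : ℝ) (μ : ℂ) :
    betaD b S δ μ t = betaD b S t μ δ := by
  rw [betaD, betaD]
  congr 1 with u
  rw [betaIntegrand, betaIntegrand]
  congr 1
  refine mul_left_cancel₀ (pow_ne_zero 2 (pow_ne_zero 2 (wb_ne_zero (b := b) 0))) ?_
  have hkernel (δ t : ℝ) : (wb b 0 ^ 2) ^ 2 *
      (Dshift b (S + δ) (t / 2 + u) * Dshift b (S - δ) (t / 2 - u)) =
        wb b (t / 2 + u + (S + δ - cb b) / 2) * wb b ((S + δ - cb b) / 2 - (t / 2 + u)) *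
          (wb b (t / 2 - u + (S - δ - cb b) / 2) * wb b ((S - δ - cb b) / 2 - (t / 2 - u))) := by
    have hadd := wb_sq_mul_Dshift hb hb1 (S + δ) (t / 2 + u)
    have hsub := wb_sq_mul_Dshift hb hb1 (S - δ) (t / 2 - u)
    push_cast at hadd hsub
    rw [sq, mul_mul_mul_comm, hadd, hsub]
  rw [hkernel, hkernel]
  ring_nf

end BetaD

section BetaD

variable {b : ℝ}

theorem integral_exp_mul_Dshift_sub (hb : 0 < b) (hb1 : b ≤ 1) {a : ℂ} (ha : |a.im| < cbIm b)
    (μ t y : ℝ) :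
    ∫ x : ℝ, cexp (2 * π * I * y * x) * (cexp (2 * π * I * μ * (x - t / 2)) * Dshift b a (t - x)) =
      cexp (2 * π * I * (μ / 2 + y) * t) *
        (fourierConst b * wb b a * Dshift b (-a) (μ + y)) := by
  have hD := fourierD_eq hb hb1 ha (μ + y)
  push_cast at hD
  rw [← hD, ← fourierD_neg hb hb1 ha, fourierD, ← integral_const_mul,
    ← integral_sub_left_eq_self _ _ t]
  congr 1 with x
  push_cast
  rw [sub_sub_cancel, ← mul_assoc, ← mul_assoc, ← Complex.exp_add, ← Complex.exp_add]
  ring_nf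

theorem wb_sq_mul_betaD (hb : 0 < b) (hb1 : b ≤ 1) (S δ μ t : ℝ) :
    wb b 0 ^ 2 * betaD b S δ μ t = wb b (S + δ) * wb b (S - δ) * betaD b (-S) δ t μ := by
  have hadd : |(S + δ : ℂ).im| < cbIm b := mod_cast abs_im_ofReal_lt_cbIm hb (S + δ)
  have hsub : |(S - δ : ℂ).im| < cbIm b := mod_cast abs_im_ofReal_lt_cbIm hb (S - δ)
  have hint : Integrable fun x : ℝ =>
      cexp (2 * π * I * μ * (x - t / 2)) * Dshift b (S - δ) (t - x) := by
    have h := ((integrable_Dshift hb hb1 hsub).comp_sub_left t).bdd_mul (c := 1)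
      (f := fun x : ℝ => cexp (2 * π * I * μ * ((x - t / 2 : ℝ) : ℂ)))
      (Continuous.aestronglyMeasurable (by fun_prop))
      (Eventually.of_forall fun x => (norm_exp_two_pi_I_mul_ofReal μ (x - t / 2)).le)
    simpa using h
  have hcentered : betaD b S δ μ t = ∫ x : ℝ, Dshift b (S + δ) x *
      (cexp (2 * π * I * μ * (x - t / 2)) * Dshift b (S - δ) (t - x)) := by
    rw [betaD, ← integral_sub_right_eq_self _ (t / 2)]
    congr 1 with x
    rw [betaIntegrand]
    push_cast
    ring_nf
  rw [hcentered, integral_Dshift_mul hb hb1 hadd hint]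
  simp_rw [integral_exp_mul_Dshift_sub hb hb1 hsub]
  rw [← integral_sub_right_eq_self _ (μ / 2), betaD, ← integral_const_mul, ← integral_const_mul,
    ← integral_const_mul]
  congr 1 with u
  rw [betaIntegrand]
  have heven := Dshift_neg_ofReal hb hb1 (a := -(S + δ)) (by rwa [neg_im, abs_neg]) (μ / 2 - u)
  push_cast at heven ⊢
  rw [neg_sub] at heven
  have hexp : 2 * π * I * (μ / 2 + (u - μ / 2)) * t = 2 * π * I * t * u := by ring
  have harg : (μ + (u - μ / 2) : ℂ) = μ / 2 + u := by ring
  rw [heven, hexp, harg, neg_add', neg_sub, ← neg_add_eq_sub (S : ℂ) δ]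
  linear_combination (wb b (S + δ) * wb b (S - δ) * Dshift b (-S - δ) (μ / 2 - u) *
    cexp (2 * π * I * t * u) * Dshift b (-S + δ) (μ / 2 + u)) * fourierConst_sq_mul hb hb1

theorem wb_sq_mul_betaD_mul_of_real (hb : 0 < b) (hb1 : b ≤ 1) (S δ μ t : ℝ) :
    wb b 0 ^ 2 * betaD b S δ μ t * (wb b (S + μ) * wb b (S - μ)) =
      wb b (S + δ) * wb b (S - δ) * wb b (S + t) * wb b (S - t) * betaD b (-S) δ μ t := by
  have hadd := wb_mul_wb_neg hb hb1 (z := S + μ) (mod_cast abs_im_ofReal_lt_cbIm hb (S + μ))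
  have hsub := wb_mul_wb_neg hb hb1 (z := S - μ) (mod_cast abs_im_ofReal_lt_cbIm hb (S - μ))
  rw [neg_sub] at hsub
  have hδ : wb b 0 ^ 2 * betaD b S δ μ t =
      wb b (S + δ) * wb b (S - δ) * betaD b (-S) μ t δ := by
    rw [wb_sq_mul_betaD hb hb1, ← ofReal_neg, betaD_symm hb hb1]
  have hμ : wb b 0 ^ 2 * betaD b (-S) μ t δ =
      wb b (μ - S) * wb b (-(S + μ)) * betaD b S t δ μ := by
    have h := wb_sq_mul_betaD hb hb1 (-S) μ t δ
    rwa [ofReal_neg, neg_neg, betaD_symm hb hb1 S, neg_add_eq_sub, ← neg_add'] at h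
  have ht : wb b 0 ^ 2 * betaD b S t δ μ =
      wb b (S + t) * wb b (S - t) * betaD b (-S) δ μ t := by
    rw [wb_sq_mul_betaD hb hb1, ← ofReal_neg, betaD_symm hb hb1]
  refine mul_left_cancel₀ (pow_ne_zero 2 (pow_ne_zero 2 (wb_ne_zero (b := b) 0))) ?_
  generalize wb b 0 ^ 2 = c at *
  linear_combination c ^ 2 * (wb b (S + μ) * wb b (S - μ)) * hδ +
    c * (wb b (S + δ) * wb b (S - δ)) * (wb b (S + μ) * wb b (S - μ)) * hμ +
    (wb b (S + δ) * wb b (S - δ)) * c ^ 2 * ht +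
    c * (wb b (S + δ) * wb b (S - δ)) * betaD b S t δ μ *
      (wb b (S - μ) * wb b (μ - S) * hadd + c * hsub)

theorem wb_sq_mul_betaD_mul (hb : 0 < b) (hb1 : b ≤ 1) (S δ t : ℝ) {μ : ℂ}
    (hμ : |μ.im| < cbIm b) :
    wb b 0 ^ 2 * betaD b S δ μ t * (wb b (S + μ) * wb b (S - μ)) =
      wb b (S + δ) * wb b (S - δ) * wb b (S + t) * wb b (S - t) * betaD b (-S) δ μ t := by
  refine eqOn_strip_of_frequently_eq (H := cbIm b) (z₀ := 0)
    (f := fun μ => wb b 0 ^ 2 * betaD b S δ μ t * (wb b (S + μ) * wb b (S - μ)))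
    (g := fun μ => wb b (S + δ) * wb b (S - δ) * wb b (S + t) * wb b (S - t) * betaD b (-S) δ μ t)
    (fun z hz => ?_) (fun z hz => ?_) (by simpa using cbIm_pos hb) ?_ hμ
  · have hadd := (differentiableAt_wb hb hb1 (z := S + z) (by simpa using hz)).comp
      (f := fun z : ℂ => S + z) z (by fun_prop)
    have hsub := (differentiableAt_wb hb hb1 (z := S - z) (by simpa using hz)).comp
      (f := fun z : ℂ => S - z) z (by fun_prop)
    exact ((differentiableAt_betaD hb hb1 S δ t hz).const_mul _).mul (hadd.mul hsub)
  · rw [← ofReal_neg]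
    exact (differentiableAt_betaD hb hb1 (-S) δ t hz).const_mul _
  · have hlim : Tendsto (fun x : ℝ => (x : ℂ)) (𝓝[≠] 0) (𝓝[≠] 0) :=
      tendsto_nhdsWithin_of_tendsto_nhds_of_eventually_within _
        ((continuous_ofReal.tendsto' 0 0 ofReal_zero).mono_left nhdsWithin_le_nhds)
        (eventually_mem_nhdsWithin.mono fun x hx => ofReal_ne_zero.mpr hx)
    exact hlim.frequently (Eventually.of_forall fun x =>
      wb_sq_mul_betaD_mul_of_real hb hb1 S δ x t).frequently

end BetaD

/-! ### The triple integral and its flip symmetry -/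

/-- The integrand of the b-Clebsch–Gordan coefficients, in parameters that make its invariance under
simultaneous permutations of the `aᵢ` and `xᵢ` visible. -/
def tripleIntegrand (b a₁ a₂ a₃ x₁ x₂ x₃ p : ℝ) : ℂ :=
  cexp (π * I * (a₁ + a₂ + a₃ + cb b) * p) *
    (Dshift b a₁ (x₁ + p) * Dshift b a₂ (x₂ + p) * Dshift b a₃ (x₃ + p))

/-- The integral entering the b-Clebsch–Gordan coefficients. -/
def tripleD (b a₁ a₂ a₃ x₁ x₂ x₃ : ℝ) : ℂ := ∫ p, tripleIntegrand b a₁ a₂ a₃ x₁ x₂ x₃ p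

/-- The integral that Parseval's formula produces from
`tripleD b (d - S) (S + δ) (S - δ) r (t / 2) (-(t / 2))`. -/
def dualTripleD (b d r δ t S : ℝ) : ℂ :=
  ∫ y : ℝ, wb b (y - (d + cb b) / 2) / wb b (y + (d + cb b) / 2 - S) *
    cexp (2 * π * I * y * r) * betaD b S δ (y + (d + cb b) / 2) t

section TripleD

variable {b : ℝ}

theorem integrable_tripleIntegrand (hb : 0 < b) (hb1 : b ≤ 1) (a₁ a₂ a₃ x₁ x₂ x₃ : ℝ) :
    Integrable (tripleIntegrand b a₁ a₂ a₃ x₁ x₂ x₃) := by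
  obtain ⟨A₁, hA₁, h₁⟩ := exists_norm_Dshift_ofReal_add_le hb hb1 a₁ x₁
  obtain ⟨A₂, hA₂, h₂⟩ := exists_norm_Dshift_ofReal_add_le hb hb1 a₂ x₂
  obtain ⟨A₃, -, h₃⟩ := exists_norm_Dshift_ofReal_add_le hb hb1 a₃ x₃
  refine integrable_exp_mul_ofReal_mul (A := A₁ * A₂ * A₃) (μ := 3 * (π * cbIm b))
    (((continuous_Dshift_add hb hb1 a₁ x₁).fun_mul (continuous_Dshift_add hb hb1 a₂ x₂)).fun_mul
      (continuous_Dshift_add hb hb1 a₃ x₃)) (fun p => ?_) ?_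
  · rw [norm_mul, norm_mul]
    calc _ ≤ A₁ * rexp (-(π * cbIm b) * |p|) * (A₂ * rexp (-(π * cbIm b) * |p|)) *
          (A₃ * rexp (-(π * cbIm b) * |p|)) := by
          gcongr
          exacts [h₁ p, h₂ p, h₃ p]
      _ = A₁ * A₂ * A₃ * (rexp (-(π * cbIm b) * |p|) ^ 3) := by ring
      _ = _ := by
          rw [← Real.exp_nat_mul]
          push_cast
          ring_nf
  · have hre : (π * I * (a₁ + a₂ + a₃ + cb b)).re = -(π * cbIm b) := by simp [cb_eq]
    have hpos := mul_pos pi_pos (cbIm_pos hb)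
    rw [hre, abs_neg, abs_of_pos hpos]
    linarith

theorem tripleD_rotate (a₁ a₂ a₃ x₁ x₂ x₃ : ℝ) :
    tripleD b a₃ a₁ a₂ x₃ x₁ x₂ = tripleD b a₁ a₂ a₃ x₁ x₂ x₃ := by
  rw [tripleD, tripleD]
  congr 1 with p
  simp only [tripleIntegrand]
  ring_nf

theorem tripleD_add (a₁ a₂ a₃ x₁ x₂ x₃ c : ℝ) :
    tripleD b a₁ a₂ a₃ (x₁ + c) (x₂ + c) (x₃ + c) =
      cexp (-(π * I * (a₁ + a₂ + a₃ + cb b) * c)) * tripleD b a₁ a₂ a₃ x₁ x₂ x₃ := by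
  rw [tripleD, tripleD, ← integral_const_mul, ← integral_sub_right_eq_self _ c]
  congr 1 with p
  simp only [tripleIntegrand]
  push_cast
  rw [add_add_sub_cancel, add_add_sub_cancel, add_add_sub_cancel, mul_sub, sub_eq_neg_add,
    Complex.exp_add, mul_assoc]

theorem wb_sq_sq_mul_dualTripleD (hb : 0 < b) (hb1 : b ≤ 1) (d r δ t S : ℝ) :
    (wb b 0 ^ 2) ^ 2 * dualTripleD b d r δ t S =
      wb b (S + δ) * wb b (S - δ) * wb b (S + t) * wb b (S - t) *
        dualTripleD b d r δ t (-S) := by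
  rw [dualTripleD, dualTripleD, ← integral_const_mul, ← integral_const_mul]
  congr 1 with y
  have him : ((y : ℂ) + (d + cb b) / 2).im = cbIm b / 2 := by simp [cb_eq]
  have hcb := cbIm_pos hb
  have hμ : |((y : ℂ) + (d + cb b) / 2).im| < cbIm b := by
    rw [him, abs_of_pos (half_pos hcb)]
    linarith
  push_cast
  generalize (y : ℂ) + (d + cb b) / 2 = μ at *
  have hbeta := wb_sq_mul_betaD_mul hb hb1 S δ t hμ
  have hinv := wb_mul_wb_neg hb hb1 (z := S - μ) (by simpa using hμ)
  rw [neg_sub] at hinv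
  rw [sub_neg_eq_add, add_comm μ]
  have hdiv : (wb b 0 ^ 2) ^ 2 * (betaD b S δ μ t / wb b (μ - S)) =
      wb b (S + δ) * wb b (S - δ) * wb b (S + t) * wb b (S - t) *
        (betaD b (-S) δ μ t / wb b (S + μ)) := by
    rw [mul_div_assoc', mul_div_assoc', div_eq_div_iff (wb_ne_zero _) (wb_ne_zero _)]
    linear_combination wb b (μ - S) * hbeta - wb b 0 ^ 2 * betaD b S δ μ t * wb b (S + μ) * hinv
  linear_combination wb b (y - (d + cb b) / 2) * cexp (2 * π * I * y * r) * hdiv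

theorem tripleD_eq_integral_Dshift_mul (hb : 0 < b) (hb1 : b ≤ 1) (d r δ t S : ℝ) :
    tripleD b (d - S) (S + δ) (S - δ) r (t / 2) (-(t / 2)) =
      ∫ x : ℝ, Dshift b (d - S) x * betaIntegrand b S δ ((S + d + cb b) / 2) t (x - r : ℝ) := by
  rw [tripleD, ← integral_sub_right_eq_self _ r]
  congr 1 with x
  have heven := Dshift_neg_ofReal hb hb1 (a := S - δ) (mod_cast abs_im_ofReal_lt_cbIm hb (S - δ))
    (t / 2 - (x - r))
  have hexp : π * I * ((d - S) + (S + δ) + (S - δ) + cb b) * (x - r) =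
      2 * π * I * ((S + d + cb b) / 2) * (x - r) := by ring
  simp only [tripleIntegrand, betaIntegrand]
  push_cast at heven ⊢
  rw [neg_sub, ← neg_add_eq_sub (t / 2 : ℂ)] at heven
  rw [heven, hexp, add_sub_cancel]
  ring

theorem integral_exp_mul_betaIntegrand_sub (S δ μ t : ℂ) (r y : ℝ) :
    ∫ x : ℝ, cexp (2 * π * I * y * x) * betaIntegrand b S δ μ t (x - r : ℝ) =
      cexp (2 * π * I * y * r) * betaD b S δ (y + μ) t := by
  rw [betaD, ← integral_const_mul, ← integral_add_right_eq_self _ r]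
  congr 1 with x
  have hexp : cexp (2 * π * I * y * (x + r : ℝ)) * cexp (2 * π * I * μ * x) =
      cexp (2 * π * I * y * r) * cexp (2 * π * I * (y + μ) * x) := by
    rw [← Complex.exp_add, ← Complex.exp_add]
    push_cast
    ring_nf
  rw [add_sub_cancel_right, betaIntegrand, betaIntegrand]
  linear_combination Dshift b (S + δ) (t / 2 + x) * Dshift b (S - δ) (t / 2 - x) * hexp

theorem tripleD_eq_dualTripleD (hb : 0 < b) (hb1 : b ≤ 1) (d r δ t S : ℝ) :
    tripleD b (d - S) (S + δ) (S - δ) r (t / 2) (-(t / 2)) =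
      fourierConst b * wb b (d - S) * cexp (-(π * I * r * S)) * dualTripleD b d r δ t S := by
  have ha : |(d - S : ℂ).im| < cbIm b := mod_cast abs_im_ofReal_lt_cbIm hb (d - S)
  have hμ : |((S + d + cb b) / 2 : ℂ).im| < cbIm b := by
    have him : ((S + d + cb b) / 2 : ℂ).im = cbIm b / 2 := by simp [cb_eq]
    rw [him, abs_of_pos (half_pos (cbIm_pos hb))]
    exact half_lt_self (cbIm_pos hb)
  rw [tripleD_eq_integral_Dshift_mul hb hb1, integral_Dshift_mul hb hb1 ha
    ((integrable_betaIntegrand hb hb1 S δ t hμ).comp_sub_right r)]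
  simp_rw [integral_exp_mul_betaIntegrand_sub]
  rw [dualTripleD, ← integral_sub_right_eq_self _ (S / 2), mul_assoc (fourierConst b * _),
    ← integral_const_mul (cexp _)]
  congr 2 with y
  have hDshift : Dshift b (-(d - S)) (y - S / 2 : ℝ) =
      wb b (y - (d + cb b) / 2) / wb b (y + (d + cb b) / 2 - S) := by
    rw [Dshift, Dfun]
    congr 2 <;> push_cast <;> ring
  have hμy : ((y - S / 2 : ℝ) : ℂ) + (S + d + cb b) / 2 = y + (d + cb b) / 2 := by
    push_cast
    ring
  have hexp : cexp (2 * π * I * (y - S / 2 : ℝ) * r) =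
      cexp (-(π * I * r * S)) * cexp (2 * π * I * y * r) := by
    rw [← Complex.exp_add]
    push_cast
    ring_nf
  rw [hDshift, hμy, hexp]
  ring

theorem wb_sq_sq_mul_tripleD_centered (hb : 0 < b) (hb1 : b ≤ 1) (d r δ t S : ℝ) :
    (wb b 0 ^ 2) ^ 2 * wb b (d + S) * cexp (2 * π * I * r * S) *
        tripleD b (d - S) (S + δ) (S - δ) r (t / 2) (-(t / 2)) =
      wb b (d - S) * (wb b (S + δ) * wb b (S - δ) * wb b (S + t) * wb b (S - t)) *
        tripleD b (d + S) (-S + δ) (-S - δ) r (t / 2) (-(t / 2)) := by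
  have hneg := tripleD_eq_dualTripleD hb hb1 d r δ t (-S)
  have hexp : cexp (2 * π * I * r * S) * cexp (-(π * I * r * S)) = cexp (π * I * r * S) := by
    rw [← Complex.exp_add]
    ring_nf
  rw [ofReal_neg, sub_neg_eq_add, sub_neg_eq_add, mul_neg, neg_neg] at hneg
  rw [tripleD_eq_dualTripleD hb hb1, hneg]
  linear_combination fourierConst b * wb b (d - S) * wb b (d + S) *
    ((wb b 0 ^ 2) ^ 2 * dualTripleD b d r δ t S * hexp +
      cexp (π * I * r * S) * wb_sq_sq_mul_dualTripleD hb hb1 d r δ t S)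

theorem tripleD_eq_exp_mul_centered (a₁ a₂ a₃ x₁ x₂ x₃ : ℝ) :
    tripleD b a₁ a₂ a₃ x₁ x₂ x₃ = cexp (-(π * I * (a₁ + a₂ + a₃ + cb b) * ((x₂ + x₃) / 2))) *
      tripleD b a₁ a₂ a₃ (x₁ - (x₂ + x₃) / 2) ((x₂ - x₃) / 2) (-((x₂ - x₃) / 2)) := by
  have h := tripleD_add (b := b) a₁ a₂ a₃ (x₁ - (x₂ + x₃) / 2) ((x₂ - x₃) / 2)
    (-((x₂ - x₃) / 2)) ((x₂ + x₃) / 2)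
  push_cast at h
  rw [← h]
  congr 1 <;> ring

theorem wb_sq_sq_mul_exp_mul_tripleD (hb : 0 < b) (hb1 : b ≤ 1) (a₁ a₂ a₃ x₁ x₂ x₃ : ℝ) :
    (wb b 0 ^ 2) ^ 2 * wb b (a₁ + a₂ + a₃) * cexp (π * I * x₁ * (a₂ + a₃)) *
        tripleD b a₁ a₂ a₃ x₁ x₂ x₃ =
      wb b a₁ * (wb b a₂ * wb b a₃ * wb b ((a₂ + a₃) / 2 + (x₂ - x₃)) *
        wb b ((a₂ + a₃) / 2 - (x₂ - x₃))) *
        tripleD b (a₁ + a₂ + a₃) (-a₃) (-a₂) x₁ x₂ x₃ := by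
  have hadd : (a₂ + a₃) / 2 + (a₂ - a₃) / 2 = a₂ := by ring
  have hsub : (a₂ + a₃) / 2 - (a₂ - a₃) / 2 = a₃ := by ring
  have hneg_add : -((a₂ + a₃) / 2) + (a₂ - a₃) / 2 = -a₃ := by ring
  have hneg_sub : -((a₂ + a₃) / 2) - (a₂ - a₃) / 2 = -a₂ := by ring
  have hsum : a₁ + (a₂ + a₃) / 2 + (a₂ + a₃) / 2 = a₁ + a₂ + a₃ := by ring
  have h := wb_sq_sq_mul_tripleD_centered hb hb1 (a₁ + (a₂ + a₃) / 2) (x₁ - (x₂ + x₃) / 2)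
    ((a₂ - a₃) / 2) (x₂ - x₃) ((a₂ + a₃) / 2)
  simp only [← ofReal_add, ← ofReal_sub] at h
  rw [add_sub_cancel_right, hadd, hsub, hneg_add, hneg_sub, hsum] at h
  rw [tripleD_eq_exp_mul_centered a₁, tripleD_eq_exp_mul_centered (a₁ + a₂ + a₃)]
  push_cast at h ⊢
  have hexp : cexp (π * I * x₁ * (a₂ + a₃)) *
      cexp (-(π * I * (a₁ + a₂ + a₃ + cb b) * ((x₂ + x₃) / 2))) =
        cexp (-(π * I * (a₁ + a₂ + a₃ + -a₃ + -a₂ + cb b) * ((x₂ + x₃) / 2))) *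
          cexp (2 * π * I * (x₁ - (x₂ + x₃) / 2) * ((a₂ + a₃) / 2)) := by
    rw [← Complex.exp_add, ← Complex.exp_add]
    ring_nf
  linear_combination (wb b 0 ^ 2) ^ 2 * wb b (a₁ + a₂ + a₃) *
    tripleD b a₁ a₂ a₃ (x₁ - (x₂ + x₃) / 2) ((x₂ - x₃) / 2) (-((x₂ - x₃) / 2)) * hexp +
    cexp (-(π * I * (a₁ + a₂ + a₃ + -a₃ + -a₂ + cb b) * ((x₂ + x₃) / 2))) * h

theorem tripleD_flip (hb : 0 < b) (hb1 : b ≤ 1) (a₁ a₂ a₃ x₁ x₂ x₃ : ℝ) :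
    (wb b 0 ^ 2) ^ 2 * wb b (x₃ - x₂ + (a₂ + a₃) / 2) *
        tripleD b (a₁ + a₂ + a₃) (-a₃) (-a₂) x₁ x₂ x₃ =
      wb b (a₁ + a₂ + a₃) * wb b (-a₁) * wb b (-a₂) * wb b (-a₃) *
        wb b (x₃ - x₂ - (a₂ + a₃) / 2) * cexp (π * I * x₁ * (a₂ + a₃)) *
          tripleD b a₁ a₂ a₃ x₁ x₂ x₃ := by
  have h := wb_sq_sq_mul_exp_mul_tripleD hb hb1 a₁ a₂ a₃ x₁ x₂ x₃
  have hinv (x : ℝ) : wb b x * wb b (-x) = wb b 0 ^ 2 :=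
    wb_mul_wb_neg hb hb1 (abs_im_ofReal_lt_cbIm hb x)
  have ht := hinv ((a₂ + a₃) / 2 + (x₂ - x₃))
  push_cast at ht
  have hsub : ((a₂ + a₃) / 2 - (x₂ - x₃) : ℂ) = x₃ - x₂ + (a₂ + a₃) / 2 := by ring
  have hneg : (-((a₂ + a₃) / 2 + (x₂ - x₃)) : ℂ) = x₃ - x₂ - (a₂ + a₃) / 2 := by ring
  rw [hsub] at h
  rw [hneg] at ht
  refine mul_left_cancel₀ (pow_ne_zero 2 (pow_ne_zero 2 (wb_ne_zero (b := b) 0))) ?_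
  generalize wb b (x₃ - x₂ - (a₂ + a₃) / 2) = v at *
  generalize wb b (x₃ - x₂ + (a₂ + a₃) / 2) = u at *
  have hprod : (wb b a₁ * wb b (-a₁)) * (wb b a₂ * wb b (-a₂)) * (wb b a₃ * wb b (-a₃)) *
      (wb b ((a₂ + a₃) / 2 + (x₂ - x₃)) * v) = (wb b 0 ^ 2) ^ 4 := by
    rw [hinv, hinv, hinv, ht]
    ring
  linear_combination -(wb b (-a₁) * wb b (-a₂) * wb b (-a₃) * v) * h -
    u * tripleD b (a₁ + a₂ + a₃) (-a₃) (-a₂) x₁ x₂ x₃ * hprod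

end TripleD

/-! ### Weyl symmetries -/

section Weyl

variable {b : ℝ}

theorem CGintegrand_eq_tripleIntegrand (s₁ s₂ s₃ p₁ p₂ : ℝ) :
    CGintegrand b s₁ s₂ s₃ p₁ p₂ =
      tripleIntegrand b (s₂ - s₁ - s₃) (s₁ - s₂ - s₃) (s₁ + s₂ + s₃) p₂ (-p₁) 0 := by
  ext p
  rw [CGintegrand, tripleIntegrand, Dshift, Dshift, Dshift]
  push_cast
  rw [zero_add]
  ring_nf

theorem integral_CGintegrand (s₁ s₂ s₃ p₁ p₂ : ℝ) :
    ∫ p : ℝ, CGintegrand b s₁ s₂ s₃ p₁ p₂ p =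
      tripleD b (s₂ - s₁ - s₃) (s₁ - s₂ - s₃) (s₁ + s₂ + s₃) p₂ (-p₁) 0 := by
  rw [CGintegrand_eq_tripleIntegrand, tripleD]

theorem wb_mul_wb_neg_ofReal (hb : 0 < b) (hb1 : b ≤ 1) (x : ℝ) :
    wb b x * wb b (-x) = wb b 0 ^ 2 :=
  wb_mul_wb_neg hb hb1 (abs_im_ofReal_lt_cbIm hb x)

theorem wb_sq_mul_Mfun (hb : 0 < b) (hb1 : b ≤ 1) (s₁ s₂ s₃ : ℝ) :
    wb b 0 ^ 2 * Mfun b s₁ s₂ s₃ = wb b (s₁ + s₂ - s₃) * wb b (s₁ + s₃ - s₂) *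
      wb b (s₂ + s₃ - s₁) * wb b (-(s₁ + s₂ + s₃)) := by
  have hsum := wb_mul_wb_neg_ofReal hb hb1 (s₁ + s₂ + s₃)
  push_cast at hsum
  rw [Mfun, mul_div_assoc', div_eq_iff (wb_ne_zero _)]
  linear_combination -(wb b (s₁ + s₂ - s₃) * wb b (s₁ + s₃ - s₂) * wb b (s₂ + s₃ - s₁)) * hsum

theorem Mfun_rotate (s₁ s₂ s₃ : ℝ) : Mfun b s₂ s₃ s₁ = Mfun b s₁ s₂ s₃ := by
  rw [Mfun, Mfun]
  ring_nf

theorem Mfun_neg_mul_Mfun (hb : 0 < b) (hb1 : b ≤ 1) (s₁ s₂ s₃ : ℝ) :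
    Mfun b (-s₁) s₂ s₃ * Mfun b s₁ s₂ s₃ = (wb b 0 ^ 2) ^ 2 := by
  have h₁ := wb_mul_wb_neg_ofReal hb hb1 (s₁ + s₂ - s₃)
  have h₂ := wb_mul_wb_neg_ofReal hb hb1 (s₁ + s₃ - s₂)
  have e₁ : (-s₁ + s₂ - s₃ : ℂ) = -(s₁ + s₃ - s₂) := by ring
  have e₂ : (-s₁ + s₃ - s₂ : ℂ) = -(s₁ + s₂ - s₃) := by ring
  have e₃ : (s₂ + s₃ - -s₁ : ℂ) = s₁ + s₂ + s₃ := by ring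
  have e₄ : (-s₁ + s₂ + s₃ : ℂ) = s₂ + s₃ - s₁ := by ring
  have hsum := wb_ne_zero (b := b) (s₁ + s₂ + s₃)
  have hdiff := wb_ne_zero (b := b) (s₂ + s₃ - s₁)
  rw [Mfun, Mfun]
  push_cast at h₁ h₂ ⊢
  rw [e₁, e₂, e₃, e₄, sq (wb b 0 ^ 2)]
  nth_rw 1 [← h₁]
  rw [← h₂]
  field_simp

theorem integral_CGintegrand_neg_first (hb : 0 < b) (hb1 : b ≤ 1) (s₁ s₂ s₃ p₁ p₂ : ℝ) :
    wb b 0 ^ 2 * wb b (p₁ + s₁) * ∫ p, CGintegrand b (-s₁) s₂ s₃ p₁ p₂ p =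
      Mfun b s₁ s₂ s₃ * wb b (p₁ - s₁) * cexp (2 * π * I * p₂ * s₁) *
        ∫ p, CGintegrand b s₁ s₂ s₃ p₁ p₂ p := by
  have hflip : (wb b 0 ^ 2) ^ 2 * wb b (p₁ + s₁) *
        tripleD b (s₂ - -s₁ - s₃) (-s₁ - s₂ - s₃) (-s₁ + s₂ + s₃) p₂ (-p₁) 0 =
      wb b (s₁ + s₂ - s₃) * wb b (s₁ + s₃ - s₂) * wb b (s₂ + s₃ - s₁) * wb b (-(s₁ + s₂ + s₃)) *
        wb b (p₁ - s₁) * cexp (2 * π * I * p₂ * s₁) *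
          tripleD b (s₂ - s₁ - s₃) (s₁ - s₂ - s₃) (s₁ + s₂ + s₃) p₂ (-p₁) 0 := by
    convert tripleD_flip hb hb1 (s₂ - s₁ - s₃) (s₁ - s₂ - s₃) (s₁ + s₂ + s₃) p₂ (-p₁) 0 using 3 <;>
      push_cast <;> ring_nf
  refine mul_left_cancel₀ (pow_ne_zero 2 (wb_ne_zero (b := b) 0)) ?_
  rw [integral_CGintegrand, integral_CGintegrand]
  linear_combination hflip - wb b (p₁ - s₁) * cexp (2 * π * I * p₂ * s₁) *
    tripleD b (s₂ - s₁ - s₃) (s₁ - s₂ - s₃) (s₁ + s₂ + s₃) p₂ (-p₁) 0 *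
      wb_sq_mul_Mfun hb hb1 s₁ s₂ s₃

theorem integral_CGintegrand_neg_second (hb : 0 < b) (hb1 : b ≤ 1) (s₁ s₂ s₃ p₁ p₂ : ℝ) :
    wb b 0 ^ 2 * wb b (p₂ + s₂) * ∫ p, CGintegrand b s₁ (-s₂) s₃ p₁ p₂ p =
      Mfun b s₁ s₂ s₃ * wb b (p₂ - s₂) * cexp (-(2 * π * I * p₁ * s₂)) *
        ∫ p, CGintegrand b s₁ s₂ s₃ p₁ p₂ p := by
  have hflip : (wb b 0 ^ 2) ^ 2 * wb b (p₂ + s₂) *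
        tripleD b (s₁ - -s₂ - s₃) (s₁ + -s₂ + s₃) (-s₂ - s₁ - s₃) (-p₁) 0 p₂ =
      wb b (s₁ + s₂ - s₃) * wb b (s₁ + s₃ - s₂) * wb b (s₂ + s₃ - s₁) * wb b (-(s₁ + s₂ + s₃)) *
        wb b (p₂ - s₂) * cexp (-(2 * π * I * p₁ * s₂)) *
          tripleD b (s₁ - s₂ - s₃) (s₁ + s₂ + s₃) (s₂ - s₁ - s₃) (-p₁) 0 p₂ := by
    convert tripleD_flip hb hb1 (s₁ - s₂ - s₃) (s₁ + s₂ + s₃) (s₂ - s₁ - s₃) (-p₁) 0 p₂ using 3 <;>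
      push_cast <;> ring_nf
  refine mul_left_cancel₀ (pow_ne_zero 2 (wb_ne_zero (b := b) 0)) ?_
  rw [integral_CGintegrand, integral_CGintegrand, tripleD_rotate (s₁ - -s₂ - s₃),
    tripleD_rotate (s₁ - s₂ - s₃)]
  linear_combination hflip - wb b (p₂ - s₂) * cexp (-(2 * π * I * p₁ * s₂)) *
    tripleD b (s₁ - s₂ - s₃) (s₁ + s₂ + s₃) (s₂ - s₁ - s₃) (-p₁) 0 p₂ *
      wb_sq_mul_Mfun hb hb1 s₁ s₂ s₃

theorem integral_CGintegrand_neg_third (hb : 0 < b) (hb1 : b ≤ 1) (s₁ s₂ s₃ p₁ p₂ : ℝ) :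
    wb b 0 ^ 2 * wb b (-(p₁ + p₂ + s₃)) * ∫ p, CGintegrand b s₁ s₂ (-s₃) p₁ p₂ p =
      Mfun b s₁ s₂ s₃ * wb b (-(p₁ + p₂ - s₃)) * ∫ p, CGintegrand b s₁ s₂ s₃ p₁ p₂ p := by
  have hflip : (wb b 0 ^ 2) ^ 2 * wb b (-(p₁ + p₂ + s₃)) *
        tripleD b (s₁ + s₂ + -s₃) (s₂ - s₁ - -s₃) (s₁ - s₂ - -s₃) 0 p₂ (-p₁) =
      wb b (s₁ + s₂ - s₃) * wb b (s₁ + s₃ - s₂) * wb b (s₂ + s₃ - s₁) * wb b (-(s₁ + s₂ + s₃)) *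
        wb b (-(p₁ + p₂ - s₃)) * cexp 0 *
          tripleD b (s₁ + s₂ + s₃) (s₂ - s₁ - s₃) (s₁ - s₂ - s₃) 0 p₂ (-p₁) := by
    convert tripleD_flip hb hb1 (s₁ + s₂ + s₃) (s₂ - s₁ - s₃) (s₁ - s₂ - s₃) 0 p₂ (-p₁) using 3 <;>
      push_cast <;> ring_nf
  refine mul_left_cancel₀ (pow_ne_zero 2 (wb_ne_zero (b := b) 0)) ?_
  rw [integral_CGintegrand, integral_CGintegrand, ← tripleD_rotate (s₂ - s₁ - -s₃),
    ← tripleD_rotate (s₂ - s₁ - s₃)]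
  rw [Complex.exp_zero] at hflip
  linear_combination hflip - wb b (-(p₁ + p₂ - s₃)) *
    tripleD b (s₁ + s₂ + s₃) (s₂ - s₁ - s₃) (s₁ - s₂ - s₃) 0 p₂ (-p₁) *
      wb_sq_mul_Mfun hb hb1 s₁ s₂ s₃

theorem wb_sq_mul_CGI_neg_first (hb : 0 < b) (hb1 : b ≤ 1) (s₁ s₂ s₃ p₁ p₂ : ℝ) :
    wb b 0 ^ 2 * CGI b (-s₁) s₂ s₃ p₁ p₂ = Mfun b s₁ s₂ s₃ * CGI b s₁ s₂ s₃ p₁ p₂ := by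
  have h := integral_CGintegrand_neg_first hb hb1 s₁ s₂ s₃ p₁ p₂
  have hexp : cexp (π * I * (p₂ * (-s₁ + cb b) - p₁ * (s₂ + cb b))) * cexp (2 * π * I * p₂ * s₁) =
      cexp (π * I * (p₂ * (s₁ + cb b) - p₁ * (s₂ + cb b))) := by
    rw [← Complex.exp_add]
    ring_nf
  rw [CGI, CGI, ← hexp, ofReal_neg, sub_neg_eq_add]
  linear_combination cexp (π * I / 2 * ((p₁ + p₂) ^ 2 - p₁ ^ 2 - p₂ ^ 2)) *
    (wb b (p₂ - s₂) / wb b (p₁ + p₂ - s₃)) *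
    cexp (π * I * (p₂ * (-s₁ + cb b) - p₁ * (s₂ + cb b))) * h

theorem wb_sq_mul_CGI_neg_second (hb : 0 < b) (hb1 : b ≤ 1) (s₁ s₂ s₃ p₁ p₂ : ℝ) :
    wb b 0 ^ 2 * CGI b s₁ (-s₂) s₃ p₁ p₂ = Mfun b s₁ s₂ s₃ * CGI b s₁ s₂ s₃ p₁ p₂ := by
  have h := integral_CGintegrand_neg_second hb hb1 s₁ s₂ s₃ p₁ p₂
  have hexp : cexp (π * I * (p₂ * (s₁ + cb b) - p₁ * (-s₂ + cb b))) *
      cexp (-(2 * π * I * p₁ * s₂)) = cexp (π * I * (p₂ * (s₁ + cb b) - p₁ * (s₂ + cb b))) := by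
    rw [← Complex.exp_add]
    ring_nf
  rw [CGI, CGI, ← hexp, ofReal_neg, sub_neg_eq_add]
  linear_combination cexp (π * I / 2 * ((p₁ + p₂) ^ 2 - p₁ ^ 2 - p₂ ^ 2)) *
    (wb b (p₁ - s₁) / wb b (p₁ + p₂ - s₃)) *
    cexp (π * I * (p₂ * (s₁ + cb b) - p₁ * (-s₂ + cb b))) * h

theorem wb_sq_mul_CGI_neg_third (hb : 0 < b) (hb1 : b ≤ 1) (s₁ s₂ s₃ p₁ p₂ : ℝ) :
    wb b 0 ^ 2 * CGI b s₁ s₂ (-s₃) p₁ p₂ = Mfun b s₁ s₂ s₃ * CGI b s₁ s₂ s₃ p₁ p₂ := by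
  have h := integral_CGintegrand_neg_third hb hb1 s₁ s₂ s₃ p₁ p₂
  have hadd := wb_mul_wb_neg_ofReal hb hb1 (p₁ + p₂ + s₃)
  have hsub := wb_mul_wb_neg_ofReal hb hb1 (p₁ + p₂ - s₃)
  push_cast at hadd hsub
  have hadd_ne := wb_ne_zero (b := b) (p₁ + p₂ + s₃)
  have hsub_ne := wb_ne_zero (b := b) (p₁ + p₂ - s₃)
  have hintegral : wb b 0 ^ 2 * (∫ p, CGintegrand b s₁ s₂ (-s₃) p₁ p₂ p) / wb b (p₁ + p₂ + s₃) =
      Mfun b s₁ s₂ s₃ * (∫ p, CGintegrand b s₁ s₂ s₃ p₁ p₂ p) / wb b (p₁ + p₂ - s₃) := by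
    rw [div_eq_div_iff hadd_ne hsub_ne]
    refine mul_left_cancel₀ (pow_ne_zero 2 (wb_ne_zero (b := b) 0)) ?_
    linear_combination wb b (p₁ + p₂ + s₃) * wb b (p₁ + p₂ - s₃) * h -
      wb b 0 ^ 2 * wb b (p₁ + p₂ - s₃) * (∫ p, CGintegrand b s₁ s₂ (-s₃) p₁ p₂ p) * hadd +
      Mfun b s₁ s₂ s₃ * wb b (p₁ + p₂ + s₃) * (∫ p, CGintegrand b s₁ s₂ s₃ p₁ p₂ p) * hsub
  rw [CGI, CGI, ofReal_neg, sub_neg_eq_add]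
  linear_combination cexp (π * I / 2 * ((p₁ + p₂) ^ 2 - p₁ ^ 2 - p₂ ^ 2)) *
    (wb b (p₁ - s₁) * wb b (p₂ - s₂)) *
    cexp (π * I * (p₂ * (s₁ + cb b) - p₁ * (s₂ + cb b))) * hintegral

theorem cb_inv (b : ℝ) : cb b⁻¹ = cb b := by
  rw [cb, cb, ofReal_inv, inv_inv, add_comm]

theorem wb_inv (b : ℝ) : wb b⁻¹ = wb b := by
  have hint (ε : ℝ) (z : ℂ) : ebIntegrand b⁻¹ ε z = ebIntegrand b ε z := by
    ext t
    rw [ebIntegrand, ebIntegrand, ofReal_inv, inv_inv, mul_right_comm (t + I * ε)]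
  ext z
  rw [wb, wb, eb, eb, ebE, ebE, cb_inv, inv_inv, min_comm, hint]

theorem Mfun_inv (b : ℝ) : Mfun b⁻¹ = Mfun b := by
  ext s₁ s₂ s₃
  rw [Mfun, Mfun, wb_inv]

theorem CGintegrand_inv (b : ℝ) : CGintegrand b⁻¹ = CGintegrand b := by
  ext s₁ s₂ s₃ p₁ p₂ p
  simp only [CGintegrand, Dfun, wb_inv, cb_inv]

theorem CGI_inv (b : ℝ) : CGI b⁻¹ = CGI b := by
  ext s₁ s₂ s₃ p₁ p₂
  rw [CGI, CGI, wb_inv, cb_inv, CGintegrand_inv]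

theorem mul_sq_eq_mul_sq_of_mul_eq {c M M' J J' : ℂ} (hc : c ≠ 0) (hM : M' * M = c ^ 2)
    (hJ : c * J' = M * J) : M' * J' ^ 2 = M * J ^ 2 := by
  refine mul_left_cancel₀ (pow_ne_zero 2 hc) ?_
  linear_combination M' * (c * J' + M * J) * hJ + M * J ^ 2 * hM

end Weyl

/-- the Weyl symmetries of the b-Clebsch–Gordan coefficients:
`M(s₁,s₂,s₃)·I(s₃,s₂,s₁;p₂,p₁)²` is invariant under each sign flip
`s₁ ↦ −s₁`, `s₂ ↦ −s₂`, `s₃ ↦ −s₃`; the defining integral converges absolutely. -/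
theorem statement11 (b : ℝ) (hb : 0 < b) (s₁ s₂ s₃ p₁ p₂ : ℝ) :
    Integrable (CGintegrand b s₁ s₂ s₃ p₁ p₂) ∧
    Mfun b (-s₁) s₂ s₃ * (CGI b (-s₁) s₂ s₃ p₁ p₂) ^ 2 =
      Mfun b s₁ s₂ s₃ * (CGI b s₁ s₂ s₃ p₁ p₂) ^ 2 ∧
    Mfun b s₁ (-s₂) s₃ * (CGI b s₁ (-s₂) s₃ p₁ p₂) ^ 2 =
      Mfun b s₁ s₂ s₃ * (CGI b s₁ s₂ s₃ p₁ p₂) ^ 2 ∧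
    Mfun b s₁ s₂ (-s₃) * (CGI b s₁ s₂ (-s₃) p₁ p₂) ^ 2 =
      Mfun b s₁ s₂ s₃ * (CGI b s₁ s₂ s₃ p₁ p₂) ^ 2 := by
  wlog hb1 : b ≤ 1 generalizing b
  · have h := this b⁻¹ (inv_pos.mpr hb) (inv_le_one_of_one_le₀ (le_of_not_ge hb1))
    simpa only [CGintegrand_inv, CGI_inv, Mfun_inv] using h
  have hc : wb b 0 ^ 2 ≠ 0 := pow_ne_zero 2 (wb_ne_zero 0)
  have hM₁ := Mfun_neg_mul_Mfun hb hb1 s₁ s₂ s₃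
  have hM₂ := Mfun_neg_mul_Mfun hb hb1 s₂ s₃ s₁
  have hM₃ := Mfun_neg_mul_Mfun hb hb1 s₃ s₁ s₂
  rw [Mfun_rotate s₁ (-s₂), Mfun_rotate s₁ s₂] at hM₂
  rw [← Mfun_rotate (-s₃), ← Mfun_rotate s₃] at hM₃
  refine ⟨?_, mul_sq_eq_mul_sq_of_mul_eq hc hM₁ (wb_sq_mul_CGI_neg_first hb hb1 ..),
    mul_sq_eq_mul_sq_of_mul_eq hc hM₂ (wb_sq_mul_CGI_neg_second hb hb1 ..),
    mul_sq_eq_mul_sq_of_mul_eq hc hM₃ (wb_sq_mul_CGI_neg_third hb hb1 ..)⟩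
  rw [CGintegrand_eq_tripleIntegrand]
  exact integrable_tripleIntegrand hb hb1 ..

end
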